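/- arXiv:1702.02670 — 9 statements merged into one kernel-verified Lean document; each statement's English description precedes it below -/
import Mathlib

section
/- For every embedding ψ = (ψ_1,…,ψ_k) of the clustered data into ℝ^d, the quality satisfies Q(ψ) ≥ log a − 1. -/
/-!
The bound is a statement about ranks, so the positions of the `x i` play no role. Fix a point `ψ i`
of a cluster of size `a` and order the other `a - 1` points of the cluster by their distance to
`ψ i`: the ball reaching the `r`-th of them contains `ψ i` and at least `r` others, so its count is
at least `r + 1`. Hence the inner sum is at least `log a!`, which is at least
`(a - 1) * (log a - 1)`. `sum_log_rank_ge` proves the resulting bound in one induction, without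
the factorial; averaging it over `i` and over the clusters gives the theorem.
-/

open Finset

/-- SNE input affinity with scales σᵢ = 2^{-1/2}:
`p(xᵢ,xⱼ) = exp(-‖xᵢ-xⱼ‖²) / ∑_{ℓ≠i} exp(-‖xᵢ-x_ℓ‖²)`. -/
noncomputable def sneP {D k : ℕ} (x : Fin k → EuclideanSpace ℝ (Fin D)) (i j : Fin k) : ℝ :=
  Real.exp (-‖x i - x j‖ ^ 2) / ∑ ℓ ∈ Finset.univ.erase i, Real.exp (-‖x i - x ℓ‖ ^ 2)

/-- SNE output affinity `q(ψᵢ,ψⱼ) = exp(-‖ψᵢ-ψⱼ‖²) / ∑_{ℓ≠i} exp(-‖ψᵢ-ψ_ℓ‖²)`. -/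
noncomputable def sneQ {d k : ℕ} (ψ : Fin k → EuclideanSpace ℝ (Fin d)) (i j : Fin k) : ℝ :=
  Real.exp (-‖ψ i - ψ j‖ ^ 2) / ∑ ℓ ∈ Finset.univ.erase i, Real.exp (-‖ψ i - ψ ℓ‖ ^ 2)

/-- SNE loss `L(ψ) = -∑ᵢ ∑_{j≠i} p(xᵢ,xⱼ) log q(ψᵢ,ψⱼ)`. -/
noncomputable def sneLoss {D d k : ℕ} (x : Fin k → EuclideanSpace ℝ (Fin D))
    (ψ : Fin k → EuclideanSpace ℝ (Fin d)) : ℝ :=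
  -∑ i : Fin k, ∑ j ∈ Finset.univ.erase i, sneP x i j * Real.log (sneQ ψ i j)

/-- The number of indices ℓ with ψ_ℓ in the closed ball centered at ψᵢ of radius ‖ψⱼ-ψᵢ‖. -/
noncomputable def ballCount {d k : ℕ} (ψ : Fin k → EuclideanSpace ℝ (Fin d)) (i j : Fin k) : ℕ :=
  (Finset.univ.filter (fun ℓ => ‖ψ ℓ - ψ i‖ ≤ ‖ψ j - ψ i‖)).card

/-- Quality of an embedding:
`Q(ψ) = (1/n) ∑ₘ (1/(a(a-1))) ∑_{(i,j) distinct in cluster m} log |ψ ∩ B(ψᵢ, ‖ψⱼ-ψᵢ‖)|`. -/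
noncomputable def quality {d k : ℕ} (n a : ℕ) (cl : Fin k → Fin n)
    (ψ : Fin k → EuclideanSpace ℝ (Fin d)) : ℝ :=
  (1 / (n : ℝ)) * ∑ m : Fin n, (1 / ((a : ℝ) * ((a : ℝ) - 1))) *
    ∑ i ∈ Finset.univ.filter (fun i => cl i = m),
      ∑ j ∈ (Finset.univ.filter (fun j => cl j = m)).erase i,
        Real.log (ballCount ψ i j)

/-- Generalized output affinity `q₂(ψᵢ,ψⱼ) = f(‖ψᵢ-ψⱼ‖) / ∑_{ℓ≠i} f(‖ψᵢ-ψ_ℓ‖)`. -/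
noncomputable def genQ {d k : ℕ} (f : ℝ → ℝ) (ψ : Fin k → EuclideanSpace ℝ (Fin d))
    (i j : Fin k) : ℝ :=
  f ‖ψ i - ψ j‖ / ∑ ℓ ∈ Finset.univ.erase i, f ‖ψ i - ψ ℓ‖

/-- Generalized loss `L₂(ψ) = -∑ᵢ ∑_{j≠i} p(xᵢ,xⱼ) log q₂(ψᵢ,ψⱼ)`. -/
noncomputable def genLoss {D d k : ℕ} (f : ℝ → ℝ) (x : Fin k → EuclideanSpace ℝ (Fin D))
    (ψ : Fin k → EuclideanSpace ℝ (Fin d)) : ℝ :=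
  -∑ i : Fin k, ∑ j ∈ Finset.univ.erase i, sneP x i j * Real.log (genQ f ψ i j)

/-- Comparison of consecutive values of `N * (log (N + 1) - 1)`, i.e. the inductive step of
`N * (log (N + 1) - 1) ≤ log (N + 1)!`. -/
lemma mul_log_succ_step (N : ℕ) :
    ((N + 1 : ℕ) : ℝ) * (Real.log (((N + 1 : ℕ) : ℝ) + 1) - 1) ≤
      Real.log (((N + 1 : ℕ) : ℝ) + 1) + (N : ℝ) * (Real.log ((N : ℝ) + 1) - 1) := by
  push_cast
  have h1 : (0 : ℝ) < (N : ℝ) + 1 := by positivity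
  have h2 : (0 : ℝ) < (N : ℝ) + 1 + 1 := by positivity
  have h3 := Real.log_le_sub_one_of_pos (div_pos h2 h1)
  rw [Real.log_div h2.ne' h1.ne'] at h3
  have h4 : ((N : ℝ) + 1 + 1) / ((N : ℝ) + 1) - 1 = 1 / ((N : ℝ) + 1) := by
    field_simp
    ring
  rw [h4] at h3
  have h5 := mul_le_mul_of_nonneg_left h3 (Nat.cast_nonneg (α := ℝ) N)
  have h6 : (N : ℝ) * (1 / ((N : ℝ) + 1)) ≤ 1 := by
    rw [mul_one_div, div_le_one h1]
    linarith
  nlinarith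

/-- The ranks of the elements of `s` with respect to `r` (ties counted upwards) are at least
`1, …, s.card` in some order; the induction removes an element with maximal `r`. -/
lemma sum_log_rank_ge {ι : Type*} [DecidableEq ι] (r : ι → ℝ) (s : Finset ι) :
    (s.card : ℝ) * (Real.log ((s.card : ℝ) + 1) - 1) ≤
      ∑ j ∈ s, Real.log (((s.filter (fun l => r l ≤ r j)).card : ℝ) + 1) := by
  induction s using Finset.induction_on_max_value r with
  | empty => simp
  | insert m s hm hmax ih =>
    rw [Finset.sum_insert hm]
    have hall : (insert m s).filter (fun l => r l ≤ r m) = insert m s := by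
      apply Finset.filter_true_of_mem
      intro l hl
      rcases Finset.mem_insert.1 hl with rfl | hl
      · exact le_rfl
      · exact hmax l hl
    rw [hall, Finset.card_insert_of_notMem hm]
    refine (mul_log_succ_step s.card).trans (add_le_add le_rfl (ih.trans ?_))
    refine Finset.sum_le_sum fun j _ => Real.log_le_log (by positivity) ?_
    gcongr
    exact Finset.subset_insert m s

/-- The center `ψ i` lies in its own ball and is not counted by the filter on the right. -/
lemma card_filter_add_one_le_ballCount {d k : ℕ} (ψ : Fin k → EuclideanSpace ℝ (Fin d))
    (C : Finset (Fin k)) (i j : Fin k) :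
    ((C.erase i).filter (fun l => ‖ψ l - ψ i‖ ≤ ‖ψ j - ψ i‖)).card + 1 ≤ ballCount ψ i j := by
  rw [ballCount, ← Finset.card_insert_of_notMem (a := i) (by simp)]
  apply Finset.card_le_card
  intro l hl
  rcases Finset.mem_insert.1 hl with rfl | hl
  · simp
  · simpa using (Finset.mem_filter.1 hl).2

lemma sum_log_ballCount_ge {d k : ℕ} (ψ : Fin k → EuclideanSpace ℝ (Fin d))
    (C : Finset (Fin k)) (i : Fin k) (hi : i ∈ C) :
    ((C.card : ℝ) - 1) * (Real.log C.card - 1) ≤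
      ∑ j ∈ C.erase i, Real.log (ballCount ψ i j) := by
  have h := sum_log_rank_ge (fun l => ‖ψ l - ψ i‖) (C.erase i)
  have hc : (((C.erase i).card : ℕ) : ℝ) + 1 = C.card := by
    exact_mod_cast Finset.card_erase_add_one hi
  rw [hc, eq_sub_of_add_eq hc] at h
  refine h.trans (Finset.sum_le_sum fun j _ => Real.log_le_log (by positivity) ?_)
  exact_mod_cast card_filter_add_one_le_ballCount ψ C i j

/-- every embedding ψ of the clustered data satisfies Q(ψ) ≥ log a − 1. -/
theorem quality_lower_bound
    (D d n a : ℕ) (hD : 0 < D) (hd : 0 < d) (hn : 2 ≤ n) (ha : 2 ≤ a)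
    (x : Fin (n * a) → EuclideanSpace ℝ (Fin D))
    (cl : Fin (n * a) → Fin n)
    (hsize : ∀ m : Fin n, (Finset.univ.filter (fun i => cl i = m)).card = a)
    (hdiam : ∀ i j : Fin (n * a), cl i = cl j → ‖x i - x j‖ ≤ 1)
    (hsep : ∀ i j : Fin (n * a), cl i ≠ cl j →
      Real.sqrt (5 * Real.log n) ≤ ‖x i - x j‖)
    (ψ : Fin (n * a) → EuclideanSpace ℝ (Fin d)) :
    Real.log a - 1 ≤ quality n a cl ψ := by
  have ha' : (2 : ℝ) ≤ a := by exact_mod_cast ha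
  have hn' : (0 : ℝ) < n := by
    have : (2 : ℝ) ≤ n := by exact_mod_cast hn
    linarith
  have hpos : (0 : ℝ) < (a : ℝ) * ((a : ℝ) - 1) := mul_pos (by linarith) (by linarith)
  have key : ∀ m : Fin n, Real.log a - 1 ≤ (1 / ((a : ℝ) * ((a : ℝ) - 1))) *
      ∑ i ∈ Finset.univ.filter (fun i => cl i = m),
        ∑ j ∈ (Finset.univ.filter (fun j => cl j = m)).erase i,
          Real.log (ballCount ψ i j) := by
    intro m
    rw [one_div_mul_eq_div, le_div_iff₀ hpos]
    have h := Finset.card_nsmul_le_sum (Finset.univ.filter (fun i => cl i = m)) _ _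
      fun i hi => sum_log_ballCount_ge ψ (Finset.univ.filter (fun i => cl i = m)) i hi
    rw [hsize m, nsmul_eq_mul] at h
    linarith
  have hsum := Finset.card_nsmul_le_sum Finset.univ _ _ fun m (_ : m ∈ Finset.univ) => key m
  rw [Finset.card_univ, Fintype.card_fin, nsmul_eq_mul] at hsum
  rw [quality, one_div_mul_eq_div, le_div_iff₀ hn']
  linarith
end

section
/- Let ψ* be an embedding attaining a global minimum of the SNE loss L over all embeddings of the clustered data into ℝ^d. Then the quality of ψ* satisfies Q(ψ*) ≤ 200·log(2a). -/
/-!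
The loss and the quality of an embedding are compared through an absolute constant.

* For any embedding and `j ≠ i`, every `ℓ ≠ i` in the ball around `ψ i` through `ψ j` contributes
  at least the numerator of `q(ψᵢ, ψⱼ)` to its denominator, so `q ≤ 1 / (ballCount - 1)` and
  `-log q ≥ log ballCount - log 2` (`log_ballCount_le`).
* Separation makes `exp (-‖xᵢ - xⱼ‖²) ≤ n⁻⁵` between clusters, so the normalising sum of `x i` is
  at most `2a - 1`, and `p(xᵢ, xⱼ) ≥ 1 / (9 (a - 1))` within a cluster (`le_sneP`). Hence a small loss
  forces a small quality.
* Collapsing the clusters to points of a line with spacing `√(log n)` gives an embedding of loss at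
  most `4 n a log (2a)` (`loss_test_le`): its normalising sums are at most `2a`, and the
  squared distances, at most `n³`, are weighted by inter-cluster affinities `p ≤ 6 n⁻⁵ / a`.

The minimiser has at most this loss, and altogether `Q ≤ log 2 + 9 * 4 * log (2a)`.
-/


open Finset

/-- A normalising sum, whose terms are at most `1`, is at most `2a - 1` once its terms from other
clusters are at most `1 / n`: there are `a - 1` terms inside the cluster and fewer than `n a`
outside. -/
lemma sum_erase_le {n a : ℕ} (hn : 2 ≤ n) {cl : Fin (n * a) → Fin n}
    (hsize : ∀ m : Fin n, (Finset.univ.filter (fun i => cl i = m)).card = a)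
    (i : Fin (n * a)) (f : Fin (n * a) → ℝ) (h1 : ∀ j, f j ≤ 1)
    (h2 : ∀ j, cl i ≠ cl j → f j ≤ 1 / n) :
    ∑ j ∈ Finset.univ.erase i, f j ≤ 2 * a - 1 := by
  have hn0 : (0 : ℝ) < n := by positivity
  have h : ∀ j ∈ Finset.univ.erase i, f j ≤ (if cl j = cl i then (1 : ℝ) else 0) + 1 / n := by
    intro j _
    have : (0 : ℝ) < 1 / n := by positivity
    split_ifs with hc
    · linarith [h1 j]
    · linarith [h2 j (fun h => hc h.symm)]
  refine (Finset.sum_le_sum h).trans ?_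
  rw [Finset.sum_erase_eq_sub (Finset.mem_univ i), Finset.sum_add_distrib, Finset.sum_boole,
    hsize (cl i)]
  have : ((n * a : ℕ) : ℝ) * (1 / n) = a := by push_cast; field_simp
  simp only [Finset.sum_const, Finset.card_univ, Fintype.card_fin, nsmul_eq_mul, this, if_true]
  have : (0 : ℝ) < 1 / n := by positivity
  linarith

lemma exp_neg_norm_le {n D : ℕ} (hn : 2 ≤ n) (v : EuclideanSpace ℝ (Fin D))
    (h : Real.sqrt (5 * Real.log n) ≤ ‖v‖) : Real.exp (-‖v‖ ^ 2) ≤ 1 / (n : ℝ) ^ 5 := by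
  have hn0 : (0 : ℝ) < n := by positivity
  have h1 : 5 * Real.log n ≤ ‖v‖ ^ 2 := Real.sqrt_le_iff.1 h |>.2
  calc Real.exp (-‖v‖ ^ 2) ≤ Real.exp (-(Real.log ((n : ℝ) ^ 5))) := by
        rw [Real.log_pow]; push_cast; gcongr
    _ = 1 / (n : ℝ) ^ 5 := by rw [Real.exp_neg, Real.exp_log (by positivity), one_div]

/-- Within a cluster the normalising sum of `x i` collects at least `(a - 1) e⁻¹ ≥ a / 6`. -/
lemma le_sum_exp {n a D : ℕ} (ha : 2 ≤ a) {x : Fin (n * a) → EuclideanSpace ℝ (Fin D)}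
    {cl : Fin (n * a) → Fin n}
    (hsize : ∀ m : Fin n, (Finset.univ.filter (fun i => cl i = m)).card = a)
    (hdiam : ∀ i j : Fin (n * a), cl i = cl j → ‖x i - x j‖ ≤ 1) (i : Fin (n * a)) :
    (a : ℝ) / 6 ≤ ∑ ℓ ∈ Finset.univ.erase i, Real.exp (-‖x i - x ℓ‖ ^ 2) := by
  have hA : (2 : ℝ) ≤ a := by exact_mod_cast ha
  have h : ∀ j ∈ Finset.univ.erase i,
      (if cl j = cl i then (1 / 3 : ℝ) else 0) ≤ Real.exp (-‖x i - x j‖ ^ 2) := by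
    intro j _
    split_ifs with hc
    · have h1 := hdiam i j hc.symm
      have h2 : ‖x i - x j‖ ^ 2 ≤ 1 := by nlinarith [norm_nonneg (x i - x j)]
      have h3 : Real.exp (-1) ≤ Real.exp (-‖x i - x j‖ ^ 2) := by gcongr
      have h4 : (1 / 3 : ℝ) ≤ Real.exp (-1) := by
        rw [Real.exp_neg, ← one_div]
        exact one_div_le_one_div_of_le (Real.exp_pos 1) (by linarith [Real.exp_one_lt_d9])
      linarith
    · positivity
  refine le_trans ?_ (Finset.sum_le_sum h)
  rw [Finset.sum_erase_eq_sub (Finset.mem_univ i), ← Finset.sum_filter, Finset.sum_const,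
    hsize (cl i)]
  simp only [nsmul_eq_mul, if_true]
  linarith

lemma one_div_pow_five_le {n : ℕ} (hn : 2 ≤ n) : 1 / (n : ℝ) ^ 5 ≤ 1 / n := by
  have h1 : (1 : ℝ) ≤ n := by exact_mod_cast (by omega : 1 ≤ n)
  exact one_div_le_one_div_of_le (by positivity) (le_self_pow₀ h1 (by norm_num))

lemma sneP_nonneg {D k : ℕ} (x : Fin k → EuclideanSpace ℝ (Fin D)) (i j : Fin k) :
    0 ≤ sneP x i j := by unfold sneP; positivity

lemma le_sneP {n a D : ℕ} (hn : 2 ≤ n) (ha : 2 ≤ a) {x : Fin (n * a) → EuclideanSpace ℝ (Fin D)}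
    {cl : Fin (n * a) → Fin n}
    (hsize : ∀ m : Fin n, (Finset.univ.filter (fun i => cl i = m)).card = a)
    (hdiam : ∀ i j : Fin (n * a), cl i = cl j → ‖x i - x j‖ ≤ 1)
    (hsep : ∀ i j : Fin (n * a), cl i ≠ cl j →
      Real.sqrt (5 * Real.log n) ≤ ‖x i - x j‖)
    (i j : Fin (n * a)) (hc : cl i = cl j) : 1 / (9 * ((a : ℝ) - 1)) ≤ sneP x i j := by
  have hA : (2 : ℝ) ≤ a := by exact_mod_cast ha
  have hlow := le_sum_exp ha hsize hdiam i
  have hup := sum_erase_le hn hsize i (fun ℓ => Real.exp (-‖x i - x ℓ‖ ^ 2))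
    (fun ℓ => Real.exp_le_one_iff.2 (by simp))
    (fun ℓ hℓ => (exp_neg_norm_le hn _ (hsep i ℓ hℓ)).trans (one_div_pow_five_le hn))
  have h2 : ‖x i - x j‖ ^ 2 ≤ 1 := by nlinarith [norm_nonneg (x i - x j), hdiam i j hc]
  have h3 : Real.exp (-1) ≤ Real.exp (-‖x i - x j‖ ^ 2) := by gcongr
  have h4 : (1 / 3 : ℝ) ≤ Real.exp (-1) := by
    rw [Real.exp_neg, ← one_div]
    exact one_div_le_one_div_of_le (Real.exp_pos 1) (by linarith [Real.exp_one_lt_d9])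
  unfold sneP
  rw [div_le_div_iff₀ (by linarith) (by linarith)]
  nlinarith

lemma sneP_le {n a D : ℕ} (hn : 2 ≤ n) (ha : 2 ≤ a) {x : Fin (n * a) → EuclideanSpace ℝ (Fin D)}
    {cl : Fin (n * a) → Fin n}
    (hsize : ∀ m : Fin n, (Finset.univ.filter (fun i => cl i = m)).card = a)
    (hdiam : ∀ i j : Fin (n * a), cl i = cl j → ‖x i - x j‖ ≤ 1)
    (hsep : ∀ i j : Fin (n * a), cl i ≠ cl j →
      Real.sqrt (5 * Real.log n) ≤ ‖x i - x j‖)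
    (i j : Fin (n * a)) (hc : cl i ≠ cl j) : sneP x i j ≤ 6 / ((n : ℝ) ^ 5 * a) := by
  have hA : (2 : ℝ) ≤ a := by exact_mod_cast ha
  have hn0 : (0 : ℝ) < n := by positivity
  have hlow := le_sum_exp ha hsize hdiam i
  have h1 := exp_neg_norm_le hn _ (hsep i j hc)
  calc sneP x i j ≤ (1 / (n : ℝ) ^ 5) / (a / 6) := by unfold sneP; gcongr
    _ = _ := by field_simp

/-- Each `ℓ ≠ i` in the ball around `ψ i` through `ψ j` adds at least the numerator of
`q(ψᵢ, ψⱼ)` to its denominator, and `log (b - 1) ≥ log b - log 2` for `b ≥ 2`. -/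
lemma log_ballCount_le {d k : ℕ} (ψ : Fin k → EuclideanSpace ℝ (Fin d)) (i j : Fin k)
    (hij : j ≠ i) : Real.log (ballCount ψ i j) ≤ Real.log 2 - Real.log (sneQ ψ i j) := by
  set B := Finset.univ.filter (fun ℓ => ‖ψ ℓ - ψ i‖ ≤ ‖ψ j - ψ i‖) with hB
  set E := Real.exp (-‖ψ i - ψ j‖ ^ 2) with hE
  have hE0 : 0 < E := Real.exp_pos _
  have hiB : i ∈ B := by simp [hB]
  have hsub : {i, j} ⊆ B := by
    intro t ht
    rcases Finset.mem_insert.1 ht with rfl | ht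
    · exact hiB
    · rw [Finset.mem_singleton.1 ht]; simp [hB]
  have hcard : 2 ≤ B.card := by
    have := Finset.card_le_card hsub
    rwa [Finset.card_pair hij.symm] at this
  have hb2 : (2 : ℝ) ≤ B.card := by exact_mod_cast hcard
  have hcardE : ((B.erase i).card : ℝ) = B.card - 1 := by
    rw [Finset.card_erase_of_mem hiB, Nat.cast_sub (by omega)]; simp
  have hsum : ((B.card : ℝ) - 1) * E ≤
      ∑ ℓ ∈ Finset.univ.erase i, Real.exp (-‖ψ i - ψ ℓ‖ ^ 2) := by
    calc ((B.card : ℝ) - 1) * E = ∑ ℓ ∈ B.erase i, E := by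
          rw [Finset.sum_const, nsmul_eq_mul, hcardE]
      _ ≤ ∑ ℓ ∈ B.erase i, Real.exp (-‖ψ i - ψ ℓ‖ ^ 2) := by
          refine Finset.sum_le_sum fun ℓ hℓ => ?_
          have h1 : ‖ψ ℓ - ψ i‖ ≤ ‖ψ j - ψ i‖ := by
            simpa [hB] using Finset.mem_of_mem_erase hℓ
          rw [norm_sub_rev (ψ ℓ), norm_sub_rev (ψ j)] at h1
          rw [hE]
          gcongr
      _ ≤ _ := Finset.sum_le_sum_of_subset_of_nonneg
          (Finset.erase_subset_erase _ (Finset.subset_univ _)) fun _ _ _ => (Real.exp_pos _).le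
  have hZ : 0 < ∑ ℓ ∈ Finset.univ.erase i, Real.exp (-‖ψ i - ψ ℓ‖ ^ 2) :=
    lt_of_lt_of_le (mul_pos (by linarith) hE0) hsum
  have hq0 : 0 < sneQ ψ i j := div_pos hE0 hZ
  have hmul : (B.card : ℝ) * sneQ ψ i j ≤ 2 := by
    unfold sneQ
    rw [← mul_div_assoc, div_le_iff₀ hZ]
    nlinarith
  have hlog := Real.log_le_log (by positivity) hmul
  rw [Real.log_mul (by positivity) hq0.ne'] at hlog
  unfold ballCount
  linarith

lemma sneQ_le_one {d k : ℕ} (ψ : Fin k → EuclideanSpace ℝ (Fin d)) (i j : Fin k)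
    (hij : j ≠ i) : sneQ ψ i j ≤ 1 := by
  unfold sneQ
  refine div_le_one_of_le₀ ?_ (by positivity)
  exact Finset.single_le_sum (f := fun ℓ => Real.exp (-‖ψ i - ψ ℓ‖ ^ 2))
    (fun _ _ => (Real.exp_pos _).le) (Finset.mem_erase.2 ⟨hij, Finset.mem_univ j⟩)

/-- The comparison embedding: cluster `m` collapses to the point at `m √(log n)` on a line. -/
noncomputable def testEmb {n a d : ℕ} (hd : 0 < d) (cl : Fin (n * a) → Fin n) :
    Fin (n * a) → EuclideanSpace ℝ (Fin d) :=
  fun i => EuclideanSpace.single ⟨0, hd⟩ (Real.sqrt (Real.log n) * ((cl i : ℕ) : ℝ))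

lemma testEmb_dist {n a d : ℕ} (hd : 0 < d) (cl : Fin (n * a) → Fin n)
    (i j : Fin (n * a)) : ‖testEmb hd cl i - testEmb hd cl j‖ ^ 2 =
      Real.log n * (((cl i : ℕ) : ℝ) - ((cl j : ℕ) : ℝ)) ^ 2 := by
  have hlog : 0 ≤ Real.log n := Real.log_natCast_nonneg n
  have h : testEmb hd cl i - testEmb hd cl j = EuclideanSpace.single (⟨0, hd⟩ : Fin d)
      (Real.sqrt (Real.log n) * (((cl i : ℕ) : ℝ) - ((cl j : ℕ) : ℝ))) := by
    ext t
    by_cases ht : t = ⟨0, hd⟩ <;> simp [testEmb, ht, mul_sub]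
  rw [h, PiLp.norm_single, Real.norm_eq_abs, sq_abs, mul_pow, Real.sq_sqrt hlog]

lemma log_two_mul_ge {a : ℕ} (ha : 2 ≤ a) : 1 ≤ Real.log (2 * a) := by
  have hA : (2 : ℝ) ≤ a := by exact_mod_cast ha
  rw [Real.le_log_iff_exp_le (by linarith)]
  linarith [Real.exp_one_lt_d9]

lemma loss_test_le {n a D d : ℕ} (hn : 2 ≤ n) (ha : 2 ≤ a) (hd : 0 < d)
    {x : Fin (n * a) → EuclideanSpace ℝ (Fin D)} {cl : Fin (n * a) → Fin n}
    (hsize : ∀ m : Fin n, (Finset.univ.filter (fun i => cl i = m)).card = a)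
    (hdiam : ∀ i j : Fin (n * a), cl i = cl j → ‖x i - x j‖ ≤ 1)
    (hsep : ∀ i j : Fin (n * a), cl i ≠ cl j →
      Real.sqrt (5 * Real.log n) ≤ ‖x i - x j‖) :
    sneLoss x (testEmb hd cl) ≤ n * a * (4 * Real.log (2 * a)) := by
  have hA : (2 : ℝ) ≤ a := by exact_mod_cast ha
  have hN : (2 : ℝ) ≤ n := by exact_mod_cast hn
  have hL := log_two_mul_ge ha
  have hlog : 0 ≤ Real.log n := Real.log_natCast_nonneg n
  have hrow : ∀ i, ∑ j ∈ Finset.univ.erase i,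
      -(sneP x i j * Real.log (sneQ (testEmb hd cl) i j)) ≤ 4 * Real.log (2 * a) := by
    intro i
    have hlow := le_sum_exp ha hsize hdiam i
    have hup := sum_erase_le hn hsize i
      (fun ℓ => Real.exp (-‖testEmb hd cl i - testEmb hd cl ℓ‖ ^ 2))
      (fun ℓ => Real.exp_le_one_iff.2 (by simp))
      (fun ℓ hℓ => by
        have hne : ((cl i : ℕ) : ℤ) - ((cl ℓ : ℕ) : ℤ) ≠ 0 := by
          intro h; exact hℓ (Fin.ext (by omega))
        -- distinct clusters sit at integer multiples of the spacing, at least one step apart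
        have h1 : (1 : ℤ) ≤ (((cl i : ℕ) : ℤ) - ((cl ℓ : ℕ) : ℤ)) ^ 2 := by
          have := sq_pos_of_ne_zero hne; omega
        have h2 : (1 : ℝ) ≤ (((cl i : ℕ) : ℝ) - ((cl ℓ : ℕ) : ℝ)) ^ 2 := by exact_mod_cast h1
        show Real.exp (-‖testEmb hd cl i - testEmb hd cl ℓ‖ ^ 2) ≤ 1 / n
        rw [testEmb_dist]
        calc _ ≤ Real.exp (-Real.log n) := Real.exp_le_exp.2 (by nlinarith)
          _ = 1 / n := by rw [Real.exp_neg, Real.exp_log (by linarith), one_div])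
    set Z := ∑ ℓ ∈ Finset.univ.erase i, Real.exp (-‖testEmb hd cl i - testEmb hd cl ℓ‖ ^ 2) with hZ
    have hP1 : ∑ j ∈ Finset.univ.erase i, sneP x i j = 1 := by
      unfold sneP
      rw [← Finset.sum_div, div_self]
      linarith
    have hterm : ∀ j ∈ Finset.univ.erase i,
        -(sneP x i j * Real.log (sneQ (testEmb hd cl) i j)) ≤
          sneP x i j * Real.log (2 * a) + 6 / ((n : ℝ) ^ 2 * a) := by
      intro j hj
      have hP := sneP_nonneg x i j
      have hZ0 : 0 < Z := Finset.sum_pos (fun _ _ => Real.exp_pos _) ⟨j, hj⟩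
      have hq : Real.log (sneQ (testEmb hd cl) i j) =
          -‖testEmb hd cl i - testEmb hd cl j‖ ^ 2 - Real.log Z := by
        unfold sneQ
        rw [Real.log_div (Real.exp_pos _).ne' hZ0.ne', Real.log_exp]
      have hlogZ : Real.log Z ≤ Real.log (2 * a) := Real.log_le_log hZ0 (by linarith)
      have hdist : sneP x i j * ‖testEmb hd cl i - testEmb hd cl j‖ ^ 2 ≤
          6 / ((n : ℝ) ^ 2 * a) := by
        rw [testEmb_dist]
        by_cases hc : cl i = cl j
        · rw [hc]; simp; positivity
        · have hi : ((cl i : ℕ) : ℝ) ≤ n := by exact_mod_cast (cl i).2.le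
          have hj' : ((cl j : ℕ) : ℝ) ≤ n := by exact_mod_cast (cl j).2.le
          have hi0 : (0 : ℝ) ≤ ((cl i : ℕ) : ℝ) := by positivity
          have hj0 : (0 : ℝ) ≤ ((cl j : ℕ) : ℝ) := by positivity
          have hsq : (((cl i : ℕ) : ℝ) - ((cl j : ℕ) : ℝ)) ^ 2 ≤ (n : ℝ) ^ 2 :=
            sq_le_sq' (by linarith) (by linarith)
          have hln : Real.log n ≤ n := (Real.log_le_sub_one_of_pos (by linarith)).trans (by linarith)
          calc _ ≤ 6 / ((n : ℝ) ^ 5 * a) * (n * (n : ℝ) ^ 2) := by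
                gcongr
                exact sneP_le hn ha hsize hdiam hsep i j hc
            _ = _ := by field_simp
      rw [hq]
      nlinarith [mul_le_mul_of_nonneg_left hlogZ hP]
    refine (Finset.sum_le_sum hterm).trans ?_
    rw [Finset.sum_add_distrib, ← Finset.sum_mul, hP1, one_mul, Finset.sum_const, nsmul_eq_mul]
    have hcard : ((Finset.univ.erase i).card : ℝ) ≤ n * a := by
      have := Finset.card_erase_le (s := (Finset.univ : Finset (Fin (n * a)))) (a := i)
      rw [Finset.card_univ, Fintype.card_fin] at this
      exact_mod_cast this
    have h3 : ((Finset.univ.erase i).card : ℝ) * (6 / ((n : ℝ) ^ 2 * a)) ≤ 3 := by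
      calc _ ≤ (n * a : ℝ) * (6 / ((n : ℝ) ^ 2 * a)) := by gcongr
        _ = 6 / n := by field_simp
        _ ≤ 3 := by rw [div_le_iff₀ (by linarith)]; linarith
    linarith
  unfold sneLoss
  rw [← Finset.sum_neg_distrib]
  simp_rw [← Finset.sum_neg_distrib]
  refine (Finset.sum_le_sum fun i _ => hrow i).trans ?_
  simp

/-- The sum over clusters in `quality` is a single sum over points. -/
lemma quality_eq {n a d : ℕ} (cl : Fin (n * a) → Fin n)
    (ψ : Fin (n * a) → EuclideanSpace ℝ (Fin d)) :
    quality n a cl ψ = (1 / (n : ℝ)) * (1 / ((a : ℝ) * ((a : ℝ) - 1))) *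
      ∑ i, ∑ j ∈ (Finset.univ.filter (fun j => cl j = cl i)).erase i,
        Real.log (ballCount ψ i j) := by
  unfold quality
  rw [← Finset.mul_sum, ← mul_assoc, ← Finset.sum_fiberwise Finset.univ cl]
  congr 1
  refine Finset.sum_congr rfl fun m _ => Finset.sum_congr rfl fun i hi => ?_
  rw [(Finset.mem_filter.1 hi).2]

/-- A small loss forces a small quality, for every embedding. -/
lemma quality_le_loss {n a D d : ℕ} (hn : 2 ≤ n) (ha : 2 ≤ a)
    {x : Fin (n * a) → EuclideanSpace ℝ (Fin D)} {cl : Fin (n * a) → Fin n}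
    (hsize : ∀ m : Fin n, (Finset.univ.filter (fun i => cl i = m)).card = a)
    (hdiam : ∀ i j : Fin (n * a), cl i = cl j → ‖x i - x j‖ ≤ 1)
    (hsep : ∀ i j : Fin (n * a), cl i ≠ cl j →
      Real.sqrt (5 * Real.log n) ≤ ‖x i - x j‖)
    (ψ : Fin (n * a) → EuclideanSpace ℝ (Fin d)) :
    quality n a cl ψ ≤ Real.log 2 + 9 * sneLoss x ψ / (n * a) := by
  have hA : (2 : ℝ) ≤ a := by exact_mod_cast ha
  have hN : (2 : ℝ) ≤ n := by exact_mod_cast hn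
  have hA1 : (0 : ℝ) < a - 1 := by linarith
  have hrow : ∀ i, ∑ j ∈ (Finset.univ.filter (fun j => cl j = cl i)).erase i,
      Real.log (ballCount ψ i j) ≤ ((a : ℝ) - 1) * Real.log 2 + 9 * ((a : ℝ) - 1) *
        ∑ j ∈ Finset.univ.erase i, -(sneP x i j * Real.log (sneQ ψ i j)) := by
    intro i
    have hnonneg : ∀ j ∈ Finset.univ.erase i, 0 ≤ -Real.log (sneQ ψ i j) := fun j hj =>
      neg_nonneg.2 (Real.log_nonpos (by unfold sneQ; positivity)
        (sneQ_le_one ψ i j (Finset.ne_of_mem_erase hj)))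
    have hterm : ∀ j ∈ (Finset.univ.filter (fun j => cl j = cl i)).erase i,
        Real.log (ballCount ψ i j) ≤ Real.log 2 + 9 * ((a : ℝ) - 1) *
          -(sneP x i j * Real.log (sneQ ψ i j)) := by
      intro j hj
      obtain ⟨hji, hjc⟩ := Finset.mem_erase.1 hj
      have hc : cl i = cl j := (Finset.mem_filter.1 hjc).2.symm
      have h1 := log_ballCount_le ψ i j hji
      have h2 := le_sneP hn ha hsize hdiam hsep i j hc
      have h3 : 1 ≤ 9 * ((a : ℝ) - 1) * sneP x i j := by
        rwa [div_le_iff₀ (by linarith), mul_comm] at h2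
      have h4 := hnonneg j (Finset.mem_erase.2 ⟨hji, Finset.mem_univ j⟩)
      nlinarith
    refine (Finset.sum_le_sum hterm).trans ?_
    rw [Finset.sum_add_distrib, ← Finset.mul_sum, Finset.sum_const, nsmul_eq_mul,
      Finset.card_erase_of_mem (by simp), hsize, Nat.cast_sub (by omega), Nat.cast_one]
    refine add_le_add le_rfl (mul_le_mul_of_nonneg_left
      (Finset.sum_le_sum_of_subset_of_nonneg (Finset.erase_subset_erase _ (Finset.subset_univ _))
        fun j hj _ => ?_) (by linarith))
    rw [← mul_neg]
    exact mul_nonneg (sneP_nonneg x i j) (hnonneg j hj)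
  have hL : sneLoss x ψ = ∑ i, ∑ j ∈ Finset.univ.erase i,
      -(sneP x i j * Real.log (sneQ ψ i j)) := by
    unfold sneLoss; simp only [Finset.sum_neg_distrib]
  have htot := Finset.sum_le_sum fun i (_ : i ∈ Finset.univ) => hrow i
  rw [Finset.sum_add_distrib, ← Finset.mul_sum (a := 9 * ((a : ℝ) - 1)), ← hL, Finset.sum_const, Finset.card_univ,
    Fintype.card_fin, nsmul_eq_mul] at htot
  push_cast at htot
  rw [quality_eq]
  calc _ ≤ (1 / (n : ℝ)) * (1 / ((a : ℝ) * ((a : ℝ) - 1))) *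
        (n * a * (((a : ℝ) - 1) * Real.log 2) + 9 * ((a : ℝ) - 1) * sneLoss x ψ) :=
        mul_le_mul_of_nonneg_left htot (by positivity)
    _ = _ := by field_simp

/-- any global minimizer ψ* of the SNE loss satisfies Q(ψ*) ≤ 200 log(2a). -/
theorem sne_embedding_guarantee
    (D d n a : ℕ) (hD : 0 < D) (hd : 0 < d) (hn : 2 ≤ n) (ha : 2 ≤ a)
    (x : Fin (n * a) → EuclideanSpace ℝ (Fin D))
    (cl : Fin (n * a) → Fin n)
    (hsize : ∀ m : Fin n, (Finset.univ.filter (fun i => cl i = m)).card = a)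
    (hdiam : ∀ i j : Fin (n * a), cl i = cl j → ‖x i - x j‖ ≤ 1)
    (hsep : ∀ i j : Fin (n * a), cl i ≠ cl j →
      Real.sqrt (5 * Real.log n) ≤ ‖x i - x j‖)
    (ψs : Fin (n * a) → EuclideanSpace ℝ (Fin d))
    (hmin : ∀ ψ : Fin (n * a) → EuclideanSpace ℝ (Fin d), sneLoss x ψs ≤ sneLoss x ψ) :
    quality n a cl ψs ≤ 200 * Real.log (2 * a) := by
  have hA : (2 : ℝ) ≤ a := by exact_mod_cast ha
  have hN : (2 : ℝ) ≤ n := by exact_mod_cast hn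
  have h1 := quality_le_loss hn ha hsize hdiam hsep ψs
  have h2 := (hmin _).trans (loss_test_le hn ha hd hsize hdiam hsep)
  have h3 : 9 * sneLoss x ψs / (n * a) ≤ 36 * Real.log (2 * a) := by
    rw [div_le_iff₀ (by positivity)]
    linarith
  have h4 := log_two_mul_ge ha
  linarith [Real.log_two_lt_d9]
end

section
/- If x_i and x_j are two distinct points lying in the same cluster, then p(x_i,x_j) ≤ 2e/a. -/
/-!
The numerator of `p(xᵢ,xⱼ)` is at most `1`. In the denominator, keep only the `a - 1` points other
than `xᵢ` in its cluster: each lies within distance `1` of `xᵢ`, so contributes at least `e⁻¹`.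
Since `a ≥ 2` gives `a - 1 ≥ a / 2`, the denominator is at least `a / (2e)`.
-/

open Finset

/-- if xᵢ, xⱼ are distinct points in the same cluster then p(xᵢ,xⱼ) ≤ 2e/a. -/
theorem sneP_upper_same_cluster
    (D n a : ℕ) (hD : 0 < D) (hn : 2 ≤ n) (ha : 2 ≤ a)
    (x : Fin (n * a) → EuclideanSpace ℝ (Fin D))
    (cl : Fin (n * a) → Fin n)
    (hsize : ∀ m : Fin n, (Finset.univ.filter (fun i => cl i = m)).card = a)
    (hdiam : ∀ i j : Fin (n * a), cl i = cl j → ‖x i - x j‖ ≤ 1)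
    (i j : Fin (n * a)) (hij : i ≠ j) (hcl : cl i = cl j) :
    sneP x i j ≤ 2 * Real.exp 1 / a := by
  -- the `a - 1 ≥ a / 2` other points of the cluster each contribute at least `e⁻¹`
  have hden : (a : ℝ) / 2 * Real.exp (-1) ≤
      ∑ ℓ ∈ Finset.univ.erase i, Real.exp (-‖x i - x ℓ‖ ^ 2) := by
    have hcard : ((Finset.univ.filter (fun ℓ => cl ℓ = cl i)).erase i).card = a - 1 := by
      rw [Finset.card_erase_of_mem (by simp), hsize]
    have hhalf : (a : ℝ) / 2 ≤ ((a - 1 : ℕ) : ℝ) := by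
      have h2 : (2 : ℝ) ≤ a := by exact_mod_cast ha
      rw [Nat.cast_sub (by omega)]
      push_cast
      linarith
    calc (a : ℝ) / 2 * Real.exp (-1) ≤ ((a - 1 : ℕ) : ℝ) * Real.exp (-1) := by gcongr
      _ = ∑ _ℓ ∈ (Finset.univ.filter (fun ℓ => cl ℓ = cl i)).erase i, Real.exp (-1) := by
        rw [Finset.sum_const, hcard, nsmul_eq_mul]
      _ ≤ ∑ ℓ ∈ (Finset.univ.filter (fun ℓ => cl ℓ = cl i)).erase i,
            Real.exp (-‖x i - x ℓ‖ ^ 2) := by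
        refine Finset.sum_le_sum fun ℓ hℓ => Real.exp_le_exp.2 (neg_le_neg ?_)
        have hcl' : cl ℓ = cl i := by simpa using (Finset.mem_erase.1 hℓ).2
        exact pow_le_one₀ (norm_nonneg _) (hdiam i ℓ hcl'.symm)
      _ ≤ ∑ ℓ ∈ Finset.univ.erase i, Real.exp (-‖x i - x ℓ‖ ^ 2) :=
        Finset.sum_le_sum_of_subset_of_nonneg
          (Finset.erase_subset_erase _ (Finset.subset_univ _))
          fun _ _ _ => (Real.exp_pos _).le
  have hnum : Real.exp (-‖x i - x j‖ ^ 2) ≤ 1 :=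
    Real.exp_le_one_iff.2 (neg_nonpos.2 (sq_nonneg _))
  have ha0 : (0 : ℝ) < a := by exact_mod_cast (by omega : 0 < a)
  calc sneP x i j ≤ 1 / ((a : ℝ) / 2 * Real.exp (-1)) :=
        div_le_div₀ zero_le_one hnum (by positivity) hden
    _ = 2 * Real.exp 1 / a := by
      rw [Real.exp_neg]
      field_simp
end

section
/- Let c > 0 and suppose x_i and x_j lie in different clusters with ‖x_i − x_j‖ ≥ c. Then p(x_i,x_j) ≤ 2·e^{1−c²}/a. -/
/-!
The denominator of `sneP x i j` already contains one term for each of the `a - 1` other points of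
the cluster of `i`. Those points are within distance `1` of `x i`, so each term is at least
`exp (-1)`, and `a - 1 ≥ a / 2` because `a ≥ 2`; hence the denominator is at least
`(a / 2) * exp (-1)`. The numerator is at most `exp (-c ^ 2)` by the separation hypothesis.
-/

open Finset

/-- if xᵢ, xⱼ lie in different clusters with ‖xᵢ-xⱼ‖ ≥ c then
p(xᵢ,xⱼ) ≤ 2 e^{1-c²}/a. -/
theorem sneP_upper_different_cluster
    (D n a : ℕ) (hD : 0 < D) (hn : 2 ≤ n) (ha : 2 ≤ a)
    (x : Fin (n * a) → EuclideanSpace ℝ (Fin D))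
    (cl : Fin (n * a) → Fin n)
    (hsize : ∀ m : Fin n, (Finset.univ.filter (fun i => cl i = m)).card = a)
    (hdiam : ∀ i j : Fin (n * a), cl i = cl j → ‖x i - x j‖ ≤ 1)
    (c : ℝ) (hc : 0 < c)
    (i j : Fin (n * a)) (hcl : cl i ≠ cl j) (hdist : c ≤ ‖x i - x j‖) :
    sneP x i j ≤ 2 * Real.exp (1 - c ^ 2) / a := by
  have hexp : ∀ ℓ ∈ (Finset.univ.filter (fun l => cl l = cl i)).erase i,
      Real.exp (-1) ≤ Real.exp (-‖x i - x ℓ‖ ^ 2) := by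
    intro ℓ hℓ
    have h1 : cl ℓ = cl i := by simpa using (Finset.mem_erase.mp hℓ).2
    have h2 := hdiam i ℓ h1.symm
    apply Real.exp_le_exp.mpr
    nlinarith [norm_nonneg (x i - x ℓ)]
  have hcard : ((Finset.univ.filter (fun l => cl l = cl i)).erase i).card = a - 1 := by
    rw [Finset.card_erase_of_mem (by simp), hsize]
  have ha' : (2 : ℝ) ≤ a := by exact_mod_cast ha
  have hden : (a : ℝ) / 2 * Real.exp (-1) ≤
      ∑ ℓ ∈ Finset.univ.erase i, Real.exp (-‖x i - x ℓ‖ ^ 2) := by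
    calc (a : ℝ) / 2 * Real.exp (-1) ≤ ((a - 1 : ℕ) : ℝ) * Real.exp (-1) := by
          apply mul_le_mul_of_nonneg_right _ (Real.exp_pos _).le
          rw [Nat.cast_sub (by omega)]
          push_cast
          linarith
      _ ≤ ∑ ℓ ∈ (Finset.univ.filter (fun l => cl l = cl i)).erase i,
            Real.exp (-‖x i - x ℓ‖ ^ 2) := by
          have h := Finset.card_nsmul_le_sum _ _ _ hexp
          rwa [hcard, nsmul_eq_mul] at h
      _ ≤ _ := Finset.sum_le_sum_of_subset_of_nonneg
          (Finset.erase_subset_erase _ (Finset.filter_subset _ _))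
          (fun _ _ _ => (Real.exp_pos _).le)
  have hnum : Real.exp (-‖x i - x j‖ ^ 2) ≤ Real.exp (-c ^ 2) := by
    apply Real.exp_le_exp.mpr
    nlinarith
  calc sneP x i j ≤ Real.exp (-c ^ 2) / ((a : ℝ) / 2 * Real.exp (-1)) :=
        div_le_div₀ (Real.exp_pos _).le hnum (by positivity) hden
    _ = 2 * Real.exp (1 - c ^ 2) / a := by
        rw [sub_eq_add_neg, Real.exp_add, Real.exp_neg 1]
        field_simp
end

section
/- If x_i and x_j are two distinct points lying in the same cluster, then p(x_i,x_j) ≥ 1/(6a). -/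
/-!
The numerator of `p(xᵢ,xⱼ)` is at least `e⁻¹ ≥ 1/3`, because the cluster has diameter at most `1`.
In the denominator, each of the `a` points of the cluster of `xᵢ` contributes at most `1`, and each
of the at most `n a` remaining points contributes at most `n⁻⁵ ≤ n⁻¹` by separation. So the
denominator is at most `a + (n a) n⁻¹ = 2a`, and `p(xᵢ,xⱼ) ≥ (1/3) / (2a) = 1/(6a)`.
-/

open Finset

/-- if xᵢ, xⱼ are distinct points in the same cluster then p(xᵢ,xⱼ) ≥ 1/(6a). -/
theorem sneP_lower_same_cluster
    (D n a : ℕ) (hD : 0 < D) (hn : 2 ≤ n) (ha : 2 ≤ a)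
    (x : Fin (n * a) → EuclideanSpace ℝ (Fin D))
    (cl : Fin (n * a) → Fin n)
    (hsize : ∀ m : Fin n, (Finset.univ.filter (fun i => cl i = m)).card = a)
    (hdiam : ∀ i j : Fin (n * a), cl i = cl j → ‖x i - x j‖ ≤ 1)
    (hsep : ∀ i j : Fin (n * a), cl i ≠ cl j →
      Real.sqrt (5 * Real.log n) ≤ ‖x i - x j‖)
    (i j : Fin (n * a)) (hij : i ≠ j) (hcl : cl i = cl j) :
    1 / (6 * a) ≤ sneP x i j := by
  have hn0 : (0 : ℝ) < n := by exact_mod_cast (by omega : 0 < n)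
  have ha0 : (0 : ℝ) < a := by exact_mod_cast (by omega : 0 < a)
  have hlog : 0 ≤ Real.log n := Real.log_natCast_nonneg n
  have hterm : ∀ ℓ, Real.exp (-‖x i - x ℓ‖ ^ 2) ≤ (if cl ℓ = cl i then 1 else 0) + (n : ℝ)⁻¹ := by
    intro ℓ
    split_ifs with h
    · have h1 : Real.exp (-‖x i - x ℓ‖ ^ 2) ≤ 1 :=
        Real.exp_le_one_iff.2 (neg_nonpos.2 (sq_nonneg _))
      have h2 := inv_pos.2 hn0
      linarith
    · have h1 : 5 * Real.log n ≤ ‖x i - x ℓ‖ ^ 2 :=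
        (Real.sqrt_le_left (norm_nonneg _)).1 (hsep i ℓ (Ne.symm h))
      calc Real.exp (-‖x i - x ℓ‖ ^ 2) ≤ Real.exp (-Real.log n) :=
            Real.exp_le_exp.2 (by linarith)
        _ = 0 + (n : ℝ)⁻¹ := by rw [Real.exp_neg, Real.exp_log hn0, zero_add]
  have hden : ∑ ℓ ∈ Finset.univ.erase i, Real.exp (-‖x i - x ℓ‖ ^ 2) ≤ 2 * a := by
    calc ∑ ℓ ∈ Finset.univ.erase i, Real.exp (-‖x i - x ℓ‖ ^ 2)
        ≤ ∑ ℓ, Real.exp (-‖x i - x ℓ‖ ^ 2) :=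
          Finset.sum_le_sum_of_subset_of_nonneg (Finset.erase_subset _ _)
            fun _ _ _ => (Real.exp_pos _).le
      _ ≤ ∑ ℓ, ((if cl ℓ = cl i then 1 else 0) + (n : ℝ)⁻¹) :=
          Finset.sum_le_sum fun ℓ _ => hterm ℓ
      _ = 2 * a := by
          rw [Finset.sum_add_distrib, Finset.sum_boole, hsize]
          simp only [Finset.sum_const, Finset.card_univ, Fintype.card_fin, nsmul_eq_mul,
            Nat.cast_mul]
          field_simp
          ring
  have hpos : 0 < ∑ ℓ ∈ Finset.univ.erase i, Real.exp (-‖x i - x ℓ‖ ^ 2) :=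
    Finset.sum_pos (fun _ _ => Real.exp_pos _)
      ⟨j, Finset.mem_erase.2 ⟨hij.symm, Finset.mem_univ j⟩⟩
  have hnum : (1 : ℝ) / 3 ≤ Real.exp (-‖x i - x j‖ ^ 2) := by
    have h1 : ‖x i - x j‖ ^ 2 ≤ 1 := pow_le_one₀ (norm_nonneg _) (hdiam i j hcl)
    calc (1 : ℝ) / 3 ≤ Real.exp (-1) := by
          rw [Real.exp_neg, ← one_div]
          exact one_div_le_one_div_of_le (Real.exp_pos 1)
            (by linarith [Real.exp_one_lt_d9])
      _ ≤ _ := Real.exp_le_exp.2 (by linarith)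
  calc (1 : ℝ) / (6 * a) = (1 / 3) / (2 * a) := by field_simp; norm_num
    _ ≤ sneP x i j := div_le_div₀ (Real.exp_pos _).le hnum hpos hden
end

section
/- For the embedding ψ⁰ that sends every point of the cluster B_m to the point (m,0,…,0) ∈ ℝ^d, one has for all i ≠ j: q(ψ⁰_i, ψ⁰_j) ≥ exp(−‖ψ⁰_i − ψ⁰_j‖²)/(2a). -/
/-! The numerator of `sneQ` is the one in the bound, so it suffices that the denominator is at most
`2a`. Completing it with the term `ℓ = i` and grouping by clusters gives `a` times a finite part of
the theta series `∑_{t ∈ ℤ} exp(-t²) ≈ 1.77`, which is shown to be at most `2`: by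
`exp(-1) ≤ 3/8`, the terms with `t ≥ 1` are dominated by the geometric series
`∑ (3/8) (1/4)^(t-1) = 1/2`, and likewise for `t ≤ -1`. -/

open Finset

lemma exp_neg_succ_sq_le (k : ℕ) : Real.exp (-((k : ℝ) + 1) ^ 2) ≤ 3 / 8 * (1 / 4) ^ k := by
  have h1 : Real.exp (-1) ≤ 3 / 8 := by
    have := Real.exp_neg_one_lt_d9
    linarith
  calc Real.exp (-((k : ℝ) + 1) ^ 2)
      ≤ Real.exp (((2 * k + 1 : ℕ) : ℝ) * (-1)) := by
        apply Real.exp_le_exp.mpr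
        push_cast
        nlinarith [sq_nonneg (k : ℝ)]
    _ = Real.exp (-1) ^ (2 * k + 1) := Real.exp_nat_mul _ _
    _ ≤ (3 / 8) ^ (2 * k + 1) := by gcongr
    _ = 3 / 8 * ((3 / 8) ^ 2) ^ k := by rw [pow_succ, pow_mul]; ring
    _ ≤ 3 / 8 * (1 / 4) ^ k := by gcongr; norm_num

lemma sum_exp_neg_succ_sq_le (N : ℕ) :
    ∑ k ∈ Finset.range N, Real.exp (-((k : ℝ) + 1) ^ 2) ≤ 1 / 2 := by
  -- the partial sums of the dominating series, in closed form, make the induction go through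
  have key : ∑ k ∈ Finset.range N, Real.exp (-((k : ℝ) + 1) ^ 2) ≤ 1 / 2 * (1 - (1 / 4) ^ N) := by
    induction N with
    | zero => simp
    | succ N ih =>
      rw [Finset.sum_range_succ, pow_succ (1 / 4 : ℝ)]
      linarith [exp_neg_succ_sq_le N]
  have : (0 : ℝ) ≤ (1 / 4) ^ N := by positivity
  linarith

lemma sum_exp_neg_sub_sq_le (n c : ℕ) (hc : c < n) :
    ∑ m ∈ Finset.range n, Real.exp (-((c : ℝ) - m) ^ 2) ≤ 2 := by
  obtain ⟨r, rfl⟩ := Nat.exists_eq_add_of_lt hc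
  have hleft : ∑ m ∈ Finset.range c, Real.exp (-((c : ℝ) - m) ^ 2)
      = ∑ k ∈ Finset.range c, Real.exp (-((k : ℝ) + 1) ^ 2) := by
    rw [← Finset.sum_range_reflect]
    refine Finset.sum_congr rfl fun m hm => ?_
    have hm' : m < c := Finset.mem_range.mp hm
    have : ((c - 1 - m : ℕ) : ℝ) = c - 1 - m := by
      rw [Nat.cast_sub (by omega), Nat.cast_sub (by omega)]
      simp
    rw [this]
    ring_nf
  have hright : ∑ k ∈ Finset.range r, Real.exp (-((c : ℝ) - ((c + 1 + k : ℕ) : ℝ)) ^ 2)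
      = ∑ k ∈ Finset.range r, Real.exp (-((k : ℝ) + 1) ^ 2) := by
    refine Finset.sum_congr rfl fun k _ => ?_
    push_cast
    ring_nf
  rw [show c + r + 1 = c + 1 + r by ring, Finset.sum_range_add, Finset.sum_range_succ, hleft,
    hright]
  have h0 : Real.exp (-((c : ℝ) - c) ^ 2) = 1 := by simp
  linarith [sum_exp_neg_succ_sq_le c, sum_exp_neg_succ_sq_le r]

/-- for the embedding ψ⁰ sending cluster Bₘ to (m,0,…,0) ∈ ℝ^d, one has
q(ψ⁰ᵢ,ψ⁰ⱼ) ≥ exp(-‖ψ⁰ᵢ-ψ⁰ⱼ‖²)/(2a) for all i ≠ j. -/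
theorem sneQ_lower_special_embedding
    (D d n a : ℕ) (hD : 0 < D) (hd : 0 < d) (hn : 2 ≤ n) (ha : 2 ≤ a)
    (x : Fin (n * a) → EuclideanSpace ℝ (Fin D))
    (cl : Fin (n * a) → Fin n)
    (hsize : ∀ m : Fin n, (Finset.univ.filter (fun i => cl i = m)).card = a)
    (ψ0 : Fin (n * a) → EuclideanSpace ℝ (Fin d))
    (hψ0 : ∀ i, ψ0 i = EuclideanSpace.single (⟨0, hd⟩ : Fin d) (((cl i : ℕ) + 1 : ℝ)))
    (i j : Fin (n * a)) (hij : i ≠ j) :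
    Real.exp (-‖ψ0 i - ψ0 j‖ ^ 2) / (2 * a) ≤ sneQ ψ0 i j := by
  have hnorm : ∀ l, ‖ψ0 i - ψ0 l‖ ^ 2 = (((cl i : ℕ) : ℝ) - ((cl l : ℕ) : ℝ)) ^ 2 := by
    intro l
    rw [hψ0, hψ0, ← dist_eq_norm, EuclideanSpace.dist_single_same, Real.dist_eq, sq_abs]
    ring
  have hfull : ∑ l, Real.exp (-‖ψ0 i - ψ0 l‖ ^ 2)
      = a * ∑ m ∈ Finset.range n, Real.exp (-(((cl i : ℕ) : ℝ) - m) ^ 2) := by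
    simp only [hnorm]
    rw [← Finset.sum_fiberwise Finset.univ cl, Finset.mul_sum,
      ← Fin.sum_univ_eq_sum_range (fun m => (a : ℝ) * Real.exp (-(((cl i : ℕ) : ℝ) - m) ^ 2))]
    refine Finset.sum_congr rfl fun m _ => ?_
    rw [Finset.sum_congr rfl (g := fun _ => Real.exp (-(((cl i : ℕ) : ℝ) - (m : ℕ)) ^ 2)),
      Finset.sum_const, hsize, nsmul_eq_mul]
    intro l hl
    rw [(Finset.mem_filter.mp hl).2]
  have hden : ∑ l ∈ Finset.univ.erase i, Real.exp (-‖ψ0 i - ψ0 l‖ ^ 2) ≤ 2 * a := by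
    calc _ ≤ ∑ l, Real.exp (-‖ψ0 i - ψ0 l‖ ^ 2) :=
          Finset.sum_le_sum_of_subset_of_nonneg (Finset.erase_subset _ _)
            fun _ _ _ => (Real.exp_pos _).le
      _ ≤ a * 2 := by
          rw [hfull]
          gcongr
          exact sum_exp_neg_sub_sq_le n (cl i) (cl i).isLt
      _ = 2 * a := by ring
  -- `j` is among the summands, so the denominator does not vanish
  have hpos : 0 < ∑ l ∈ Finset.univ.erase i, Real.exp (-‖ψ0 i - ψ0 l‖ ^ 2) :=
    Finset.sum_pos (fun _ _ => Real.exp_pos _)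
      ⟨j, Finset.mem_erase.mpr ⟨hij.symm, Finset.mem_univ _⟩⟩
  unfold sneQ
  gcongr
end

section
/- For the embedding ψ⁰ that sends every point of the cluster B_m to the point (m,0,…,0) ∈ ℝ^d, and for every fixed index i, one has ∑_{j≠i} p(x_i,x_j)·log(1/q(ψ⁰_i,ψ⁰_j)) ≤ 2e·log(2a) + 2e^{1−c²}·(n² + log(2a))·n, where c = √(5 log n). -/
/-!
The embedding is constant on clusters, so with `Z = ∑_{ℓ ≠ i} exp (-‖ψ⁰ᵢ - ψ⁰_ℓ‖²)` each summand is
`p(xᵢ, xⱼ) * (‖ψ⁰ᵢ - ψ⁰ⱼ‖² + log Z)`.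

* Since `∑_{t ≥ 1} exp (-t²) ≤ 1 / 2`, summing over the integer images of the clusters gives
  `Z ≤ 2a` (`sum_exp_neg_sq_dist_le_two`).
* Inside the cluster of `i` the squared distance vanishes and the weights `p` sum to at most `1`,
  which contributes at most `log (2a) ≤ 2e log (2a)`.
* For `j` in another cluster the numerator of `p` is at most `exp (-c²)`, while the `a - 1 ≥ a / 2`
  cluster mates of `i` make its denominator at least `(a / 2) * exp (-1)`. Hence
  `p ≤ 2 * exp (1 - c²) / a`; there are at most `n * a` such `j`, and each squared distance is at
  most `n²`.
-/

open Finset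

/-- Half of the Gaussian sum over the nonzero integers is at most `1 / 2`: the terms satisfy
`exp (-t²) ≤ 2 / 5 ^ t` for `t ≥ 1`. -/
lemma sum_exp_neg_succ_sq_le_half (N : ℕ) :
    ∑ t ∈ Finset.range N, Real.exp (-((t : ℝ) + 1) ^ 2) ≤ 1 / 2 := by
  have e1 : Real.exp (-1) ≤ 2 / 5 := by
    rw [Real.exp_neg, inv_le_comm₀ (Real.exp_pos _) (by norm_num)]
    have := Real.exp_one_gt_d9
    norm_num
    linarith
  have e3 : Real.exp (-3) ≤ 1 / 5 := by
    have h : Real.exp (-3) = Real.exp (-1) ^ 3 := by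
      rw [← Real.exp_nat_mul]; norm_num
    rw [h]
    calc Real.exp (-1) ^ 3 ≤ (2 / 5 : ℝ) ^ 3 := by gcongr
      _ ≤ 1 / 5 := by norm_num
  have hterm : ∀ t : ℕ, Real.exp (-((t : ℝ) + 1) ^ 2) ≤ 2 / 5 * (1 / 5) ^ t := by
    intro t
    calc Real.exp (-((t : ℝ) + 1) ^ 2) ≤ Real.exp (-1 + t * (-3)) := by
          apply Real.exp_le_exp.mpr
          -- This is `(t + 1)² ≥ 1 + 3t`, that is, `t ≤ t²`, which needs `t` to be an integer.
          have : (t : ℝ) ≤ (t : ℝ) ^ 2 := by exact_mod_cast Nat.le_self_pow two_ne_zero t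
          nlinarith
      _ = Real.exp (-1) * Real.exp (-3) ^ t := by rw [Real.exp_add, Real.exp_nat_mul]
      _ ≤ 2 / 5 * (1 / 5) ^ t := by gcongr
  have hgeom : ∑ t ∈ Finset.range N, (2 / 5 : ℝ) * (1 / 5) ^ t = 1 / 2 - 1 / 2 * (1 / 5) ^ N := by
    induction N with
    | zero => simp
    | succ N ih => rw [Finset.sum_range_succ, ih, pow_succ]; ring
  calc _ ≤ ∑ t ∈ Finset.range N, (2 / 5 : ℝ) * (1 / 5) ^ t := Finset.sum_le_sum fun t _ => hterm t
    _ ≤ 1 / 2 := by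
      rw [hgeom]
      have : (0 : ℝ) < (1 / 5) ^ N := by positivity
      linarith

lemma sum_exp_neg_sq_dist_le_two {n : ℕ} (k : Fin n) :
    ∑ m : Fin n, Real.exp (-((k : ℝ) - (m : ℝ)) ^ 2) ≤ 2 := by
  obtain ⟨k, hk⟩ := k
  obtain ⟨r, rfl⟩ : ∃ r, n = k + 1 + r := ⟨n - (k + 1), by omega⟩
  rw [Fin.sum_univ_eq_sum_range (fun m : ℕ => Real.exp (-((k : ℝ) - (m : ℝ)) ^ 2)),
    Finset.sum_range_add, Finset.sum_range_succ, ← Finset.sum_range_reflect]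
  have hleft : ∑ j ∈ Finset.range k, Real.exp (-((k : ℝ) - ((k - 1 - j : ℕ) : ℝ)) ^ 2) ≤ 1 / 2 := by
    refine le_trans (le_of_eq (Finset.sum_congr rfl fun j hj => ?_)) (sum_exp_neg_succ_sq_le_half k)
    have hj' : k - 1 - j + (j + 1) = k := by have := Finset.mem_range.mp hj; omega
    have hc : ((k - 1 - j : ℕ) : ℝ) + ((j : ℝ) + 1) = k := by exact_mod_cast hj'
    rw [← hc]; ring_nf
  have hright : ∑ j ∈ Finset.range r, Real.exp (-((k : ℝ) - ((k + 1 + j : ℕ) : ℝ)) ^ 2) ≤ 1 / 2 := by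
    refine le_trans (le_of_eq (Finset.sum_congr rfl fun j _ => ?_)) (sum_exp_neg_succ_sq_le_half r)
    push_cast; ring_nf
  have hmid : Real.exp (-((k : ℝ) - (k : ℝ)) ^ 2) = 1 := by simp
  linarith

/-- for the embedding ψ⁰ sending cluster Bₘ to (m,0,…,0) ∈ ℝ^d and any fixed i,
∑_{j≠i} p(xᵢ,xⱼ) log(1/q(ψ⁰ᵢ,ψ⁰ⱼ)) ≤ 2e log(2a) + 2e^{1-c²}(n² + log(2a))n with c = √(5 log n). -/
theorem pointwise_loss_upper_special_embedding
    (D d n a : ℕ) (hD : 0 < D) (hd : 0 < d) (hn : 2 ≤ n) (ha : 2 ≤ a)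
    (x : Fin (n * a) → EuclideanSpace ℝ (Fin D))
    (cl : Fin (n * a) → Fin n)
    (hsize : ∀ m : Fin n, (Finset.univ.filter (fun i => cl i = m)).card = a)
    (hdiam : ∀ i j : Fin (n * a), cl i = cl j → ‖x i - x j‖ ≤ 1)
    (hsep : ∀ i j : Fin (n * a), cl i ≠ cl j →
      Real.sqrt (5 * Real.log n) ≤ ‖x i - x j‖)
    (ψ0 : Fin (n * a) → EuclideanSpace ℝ (Fin d))
    (hψ0 : ∀ i, ψ0 i = EuclideanSpace.single (⟨0, hd⟩ : Fin d) (((cl i : ℕ) + 1 : ℝ)))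
    (i : Fin (n * a)) :
    ∑ j ∈ Finset.univ.erase i, sneP x i j * Real.log (1 / sneQ ψ0 i j) ≤
      2 * Real.exp 1 * Real.log (2 * a) +
        2 * Real.exp (1 - Real.sqrt (5 * Real.log n) ^ 2) * ((n : ℝ) ^ 2 + Real.log (2 * a)) * n := by
  have hψ : ∀ j, ‖ψ0 i - ψ0 j‖ ^ 2 = (((cl i : ℕ) : ℝ) - ((cl j : ℕ) : ℝ)) ^ 2 := by
    intro j
    have h : ψ0 i - ψ0 j = EuclideanSpace.single (⟨0, hd⟩ : Fin d)
        (((cl i : ℕ) : ℝ) - ((cl j : ℕ) : ℝ)) := by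
      ext t
      rw [hψ0, hψ0]
      by_cases ht : t = ⟨0, hd⟩ <;> simp [ht]
    rw [h, PiLp.norm_single, Real.norm_eq_abs, sq_abs]
  have ha' : (2 : ℝ) ≤ a := by exact_mod_cast ha
  have hcard : ((((Finset.univ.filter (fun j => cl j = cl i)).erase i).card : ℕ) : ℝ) = a - 1 := by
    rw [Finset.card_erase_of_mem (by simp), hsize, Nat.cast_sub (by omega), Nat.cast_one]
  have hsub : (Finset.univ.filter (fun j => cl j = cl i)).erase i ⊆ Finset.univ.erase i :=
    Finset.erase_subset_erase _ (Finset.subset_univ _)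
  set Z : ℝ := ∑ ℓ ∈ Finset.univ.erase i, Real.exp (-‖ψ0 i - ψ0 ℓ‖ ^ 2) with hZ
  set S : ℝ := ∑ ℓ ∈ Finset.univ.erase i, Real.exp (-‖x i - x ℓ‖ ^ 2) with hS
  have hne : (Finset.univ.erase i).Nonempty := by
    refine Finset.Nonempty.mono hsub (Finset.card_pos.mp ?_)
    have : (0 : ℝ) < (((Finset.univ.filter (fun j => cl j = cl i)).erase i).card : ℕ) := by
      rw [hcard]; linarith
    exact_mod_cast this
  have hZpos : 0 < Z := Finset.sum_pos (fun _ _ => Real.exp_pos _) hne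
  have hSpos : 0 < S := Finset.sum_pos (fun _ _ => Real.exp_pos _) hne
  have hZle : Z ≤ 2 * a := by
    calc Z ≤ ∑ ℓ, Real.exp (-‖ψ0 i - ψ0 ℓ‖ ^ 2) :=
          Finset.sum_le_sum_of_subset_of_nonneg (Finset.subset_univ _)
            fun _ _ _ => (Real.exp_pos _).le
      _ = ∑ m : Fin n, ∑ ℓ ∈ Finset.univ.filter (fun ℓ => cl ℓ = m),
            Real.exp (-(((cl i : ℕ) : ℝ) - ((cl ℓ : ℕ) : ℝ)) ^ 2) := by
          simp only [hψ]
          exact (Finset.sum_fiberwise _ _ _).symm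
      _ = ∑ m : Fin n, a * Real.exp (-(((cl i : ℕ) : ℝ) - ((m : ℕ) : ℝ)) ^ 2) := by
          refine Finset.sum_congr rfl fun m _ => ?_
          rw [Finset.sum_congr rfl (g := fun _ => Real.exp (-(((cl i : ℕ) : ℝ) - ((m : ℕ) : ℝ)) ^ 2)),
            Finset.sum_const, hsize, nsmul_eq_mul]
          intro ℓ hℓ
          rw [(Finset.mem_filter.mp hℓ).2]
      _ ≤ 2 * a := by
          rw [← Finset.mul_sum]
          nlinarith [sum_exp_neg_sq_dist_le_two (cl i)]
  have hSge : (a / 2) * Real.exp (-1) ≤ S := by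
    calc (a / 2) * Real.exp (-1) ≤ ((a : ℝ) - 1) * Real.exp (-1) := by
          gcongr; linarith
      _ = ∑ _j ∈ (Finset.univ.filter (fun j => cl j = cl i)).erase i, Real.exp (-1) := by
          rw [Finset.sum_const, nsmul_eq_mul, hcard]
      _ ≤ ∑ ℓ ∈ (Finset.univ.filter (fun j => cl j = cl i)).erase i,
            Real.exp (-‖x i - x ℓ‖ ^ 2) := by
          refine Finset.sum_le_sum fun ℓ hℓ => Real.exp_le_exp.mpr ?_
          have h := hdiam i ℓ (Finset.mem_filter.mp (Finset.mem_of_mem_erase hℓ)).2.symm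
          nlinarith [norm_nonneg (x i - x ℓ)]
      _ ≤ S := Finset.sum_le_sum_of_subset_of_nonneg hsub fun _ _ _ => (Real.exp_pos _).le
  have hlogq : ∀ j, Real.log (1 / sneQ ψ0 i j) =
      (((cl i : ℕ) : ℝ) - ((cl j : ℕ) : ℝ)) ^ 2 + Real.log Z := by
    intro j
    rw [sneQ, ← hZ, one_div_div, Real.log_div hZpos.ne' (Real.exp_pos _).ne', Real.log_exp, hψ]
    ring
  have hlogZ : Real.log Z ≤ Real.log (2 * a) := Real.log_le_log hZpos hZle
  have hL : 0 ≤ Real.log (2 * a) := Real.log_nonneg (by linarith)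
  have hp0 : ∀ j, 0 ≤ sneP x i j := fun j => div_nonneg (Real.exp_pos _).le hSpos.le
  have hpsum : ∑ j ∈ Finset.univ.erase i, sneP x i j = 1 := by
    simp only [sneP]
    rw [← Finset.sum_div, ← hS, div_self hSpos.ne']
  set c : ℝ := Real.sqrt (5 * Real.log n) with hc
  have hc0 : 0 ≤ c := Real.sqrt_nonneg _
  set K : ℝ := 2 * Real.exp (1 - c ^ 2) / a * ((n : ℝ) ^ 2 + Real.log (2 * a)) with hK
  have hK0 : 0 ≤ K := by positivity
  -- One bound covers both cases: the first term pays for cluster mates, the second for the others.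
  have hterm : ∀ j, sneP x i j * Real.log (1 / sneQ ψ0 i j) ≤
      sneP x i j * Real.log (2 * a) + K := by
    intro j
    rw [hlogq]
    by_cases hj : cl i = cl j
    · rw [hj, sub_self]
      have := mul_le_mul_of_nonneg_left hlogZ (hp0 j)
      nlinarith
    · have hpj : sneP x i j ≤ 2 * Real.exp (1 - c ^ 2) / a := by
        calc sneP x i j ≤ Real.exp (-c ^ 2) / ((a / 2) * Real.exp (-1)) := by
              rw [sneP, ← hS]
              have h := hsep i j hj
              gcongr
          _ = 2 * Real.exp (1 - c ^ 2) / a := by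
              rw [show (1 : ℝ) - c ^ 2 = -c ^ 2 - -1 by ring, Real.exp_sub]
              field_simp
      have hsq : (((cl i : ℕ) : ℝ) - ((cl j : ℕ) : ℝ)) ^ 2 ≤ (n : ℝ) ^ 2 := by
        have h1 : ((cl i : ℕ) : ℝ) ≤ n := by exact_mod_cast (cl i).isLt.le
        have h2 : ((cl j : ℕ) : ℝ) ≤ n := by exact_mod_cast (cl j).isLt.le
        apply sq_le_sq'
        · linarith [Nat.cast_nonneg (α := ℝ) (cl i : ℕ)]
        · linarith [Nat.cast_nonneg (α := ℝ) (cl j : ℕ)]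
      calc _ ≤ sneP x i j * ((n : ℝ) ^ 2 + Real.log (2 * a)) := by
            have := hp0 j
            gcongr
        _ ≤ K := by rw [hK]; gcongr
        _ ≤ _ := by linarith [mul_nonneg (hp0 j) hL]
  have hcardK : ((Finset.univ.erase i).card : ℝ) ≤ n * a := by
    have h := Finset.card_erase_le (s := (Finset.univ : Finset (Fin (n * a)))) (a := i)
    rw [Finset.card_univ, Fintype.card_fin] at h
    exact_mod_cast h
  calc _ ≤ ∑ j ∈ Finset.univ.erase i, (sneP x i j * Real.log (2 * a) + K) :=
        Finset.sum_le_sum fun j _ => hterm j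
    _ = Real.log (2 * a) + (Finset.univ.erase i).card * K := by
        rw [Finset.sum_add_distrib, ← Finset.sum_mul, hpsum, one_mul, Finset.sum_const,
          nsmul_eq_mul]
    _ ≤ 2 * Real.exp 1 * Real.log (2 * a) + (n * a) * K := by
        gcongr
        have : (1 : ℝ) ≤ 2 * Real.exp 1 := by linarith [Real.exp_one_gt_d9]
        exact le_mul_of_one_le_left hL this
    _ = _ := by
        rw [hK]
        field_simp
end

section
/- Let ψ* be an embedding attaining a global minimum of the SNE loss L over all embeddings of the clustered data into ℝ^d. Then L(ψ*) ≤ 6e·n·a·log(2a). -/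
/-!
A minimizer does no worse than any test embedding, so it suffices to exhibit one of small loss.
Collapse each cluster `m` to the single point `m * √(log n)` of the first coordinate axis
(`lineEmbedding`). Writing `S i` for the normalizing sum of `q` at `i`, one has
`-log q(ψᵢ,ψⱼ) = ‖ψᵢ-ψⱼ‖² + log (S i)`, and the `p(xᵢ,·)` sum to `1`, so that
`L(ψ) = ∑ᵢ (log (S i) + ∑ⱼ p(xᵢ,xⱼ) ‖ψᵢ-ψⱼ‖²)` (`sneLoss_eq`).

* Distinct clusters are sent to distance at least `√(log n)`, so each of the `n * a` points
  contributes at most `1/n` to `S i`, or `1` if it is in the cluster of `i`. Thus `S i ≤ 2a`.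
* Distinct clusters are sent to squared distance at most `n² log n ≤ n³`, whereas the separation of
  the data gives `p(xᵢ,xⱼ) ≤ e n⁻⁵ / (a-1)` across clusters. The sum over the at most `n * a`
  indices `j` is thus at most `2e/n ≤ e`.

Hence the loss is at most `n a (log (2a) + e)`, which is below the claimed bound since
`log (2a) ≥ log 2 > 1/2`.
-/

open Finset

lemma sneDenom_pos {D k : ℕ} (x : Fin k → EuclideanSpace ℝ (Fin D)) (hk : 2 ≤ k) (i : Fin k) :
    0 < ∑ ℓ ∈ Finset.univ.erase i, Real.exp (-‖x i - x ℓ‖ ^ 2) := by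
  apply Finset.sum_pos (fun _ _ => Real.exp_pos _)
  rw [← Finset.card_pos, Finset.card_erase_of_mem (Finset.mem_univ _), Finset.card_univ,
    Fintype.card_fin]
  omega

lemma sneP_sum {D k : ℕ} (x : Fin k → EuclideanSpace ℝ (Fin D)) (hk : 2 ≤ k) (i : Fin k) :
    ∑ j ∈ Finset.univ.erase i, sneP x i j = 1 := by
  simp only [sneP]
  rw [← Finset.sum_div, div_self (sneDenom_pos x hk i).ne']

lemma sneLoss_eq {D d k : ℕ} (x : Fin k → EuclideanSpace ℝ (Fin D))
    (ψ : Fin k → EuclideanSpace ℝ (Fin d)) (hk : 2 ≤ k) :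
    sneLoss x ψ = ∑ i : Fin k,
      (Real.log (∑ ℓ ∈ Finset.univ.erase i, Real.exp (-‖ψ i - ψ ℓ‖ ^ 2)) +
        ∑ j ∈ Finset.univ.erase i, sneP x i j * ‖ψ i - ψ j‖ ^ 2) := by
  rw [sneLoss, ← Finset.sum_neg_distrib]
  refine Finset.sum_congr rfl fun i _ => ?_
  have hS := sneDenom_pos ψ hk i
  have hlog : ∀ j, Real.log (sneQ ψ i j) = -‖ψ i - ψ j‖ ^ 2 -
      Real.log (∑ ℓ ∈ Finset.univ.erase i, Real.exp (-‖ψ i - ψ ℓ‖ ^ 2)) := by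
    intro j
    rw [sneQ, Real.log_div (Real.exp_pos _).ne' hS.ne', Real.log_exp]
  simp only [hlog, mul_sub, Finset.sum_sub_distrib, ← Finset.sum_mul, sneP_sum x hk i,
    mul_neg, Finset.sum_neg_distrib]
  ring

/-- The test embedding: cluster `m` is collapsed to the point `m * √(log n)` of the first
coordinate axis. -/
noncomputable def lineEmbedding {d n k : ℕ} (hd : 0 < d) (cl : Fin k → Fin n) (i : Fin k) :
    EuclideanSpace ℝ (Fin d) :=
  EuclideanSpace.single ⟨0, hd⟩ (((cl i : ℕ) : ℝ) * Real.sqrt (Real.log n))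

lemma lineEmbedding_norm_sq {d n k : ℕ} (hd : 0 < d) (cl : Fin k → Fin n)
    (i j : Fin k) :
    ‖lineEmbedding (d := d) hd cl i - lineEmbedding hd cl j‖ ^ 2 =
      (((cl i : ℕ) : ℝ) - ((cl j : ℕ) : ℝ)) ^ 2 * Real.log n := by
  have hlog : 0 ≤ Real.log n := Real.log_natCast_nonneg n
  have h : lineEmbedding (d := d) hd cl i - lineEmbedding hd cl j =
      EuclideanSpace.single ⟨0, hd⟩
        ((((cl i : ℕ) : ℝ) - ((cl j : ℕ) : ℝ)) * Real.sqrt (Real.log n)) := by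
    ext t
    by_cases ht : t = ⟨0, hd⟩ <;> simp [lineEmbedding, ht, sub_mul]
  rw [h, PiLp.norm_single, Real.norm_eq_abs, sq_abs, mul_pow, Real.sq_sqrt hlog]

/-- The normalizing sum of the test embedding is at most `2a`: the cluster of `i` contributes at
most `a`, and each of the `n * a` points at most `1/n` more. -/
lemma lineEmbedding_denom_le {d n a : ℕ} (hd : 0 < d) (hn : 2 ≤ n)
    (cl : Fin (n * a) → Fin n)
    (hsize : ∀ m : Fin n, (Finset.univ.filter (fun i => cl i = m)).card = a)
    (i : Fin (n * a)) :
    ∑ ℓ ∈ Finset.univ.erase i,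
      Real.exp (-‖lineEmbedding (d := d) hd cl i - lineEmbedding hd cl ℓ‖ ^ 2) ≤ 2 * a := by
  have hn0 : (0 : ℝ) < n := by positivity
  have hlog : 0 ≤ Real.log n := Real.log_natCast_nonneg n
  calc _ ≤ ∑ ℓ, Real.exp (-‖lineEmbedding (d := d) hd cl i - lineEmbedding hd cl ℓ‖ ^ 2) :=
        Finset.sum_le_sum_of_subset_of_nonneg (Finset.erase_subset _ _)
          fun _ _ _ => (Real.exp_pos _).le
    _ ≤ ∑ ℓ, ((if cl ℓ = cl i then (1 : ℝ) else 0) + 1 / n) := by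
        refine Finset.sum_le_sum fun ℓ _ => ?_
        rw [lineEmbedding_norm_sq hd]
        split_ifs with h
        · simp [h]
        · rw [zero_add, one_div, ← Real.exp_log hn0, ← Real.exp_neg, Real.exp_log hn0]
          apply Real.exp_le_exp.2
          have hz : (1 : ℤ) ≤ ((cl i : ℤ) - (cl ℓ : ℤ)) ^ 2 := by
            have hne : ((cl i : ℤ) - (cl ℓ : ℤ)) ≠ 0 := by
              intro h0
              exact h (Fin.ext (by omega))
            have := sq_pos_of_ne_zero hne
            omega
          have hr : (1 : ℝ) ≤ (((cl i : ℕ) : ℝ) - ((cl ℓ : ℕ) : ℝ)) ^ 2 := by exact_mod_cast hz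
          nlinarith
    _ = 2 * a := by
        rw [Finset.sum_add_distrib, Finset.sum_boole, hsize]
        simp only [Finset.sum_const, Finset.card_univ, Fintype.card_fin, nsmul_eq_mul]
        push_cast
        field_simp
        ring

/-- The cluster of `i` alone makes the normalizing sum of `p` at `i` at least `(a-1)/e`. -/
lemma sneDenom_ge {D n a : ℕ} (ha : 2 ≤ a) (x : Fin (n * a) → EuclideanSpace ℝ (Fin D))
    (cl : Fin (n * a) → Fin n)
    (hsize : ∀ m : Fin n, (Finset.univ.filter (fun i => cl i = m)).card = a)
    (hdiam : ∀ i j : Fin (n * a), cl i = cl j → ‖x i - x j‖ ≤ 1) (i : Fin (n * a)) :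
    ((a : ℝ) - 1) * Real.exp (-1) ≤
      ∑ ℓ ∈ Finset.univ.erase i, Real.exp (-‖x i - x ℓ‖ ^ 2) := by
  have hcard : (((Finset.univ.filter (fun j => cl j = cl i)).erase i).card : ℝ) = a - 1 := by
    rw [Finset.card_erase_of_mem (by simp), hsize, Nat.cast_sub (by omega)]
    simp
  calc ((a : ℝ) - 1) * Real.exp (-1)
      = ∑ ℓ ∈ (Finset.univ.filter (fun j => cl j = cl i)).erase i, Real.exp (-1) := by
        rw [Finset.sum_const, nsmul_eq_mul, hcard]
    _ ≤ ∑ ℓ ∈ (Finset.univ.filter (fun j => cl j = cl i)).erase i,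
          Real.exp (-‖x i - x ℓ‖ ^ 2) := by
        refine Finset.sum_le_sum fun ℓ hℓ => Real.exp_le_exp.2 ?_
        have h := hdiam i ℓ (by simp at hℓ; exact hℓ.2.symm)
        nlinarith [norm_nonneg (x i - x ℓ)]
    _ ≤ _ := Finset.sum_le_sum_of_subset_of_nonneg
        (Finset.erase_subset_erase _ (Finset.filter_subset _ _))
        fun _ _ _ => (Real.exp_pos _).le

/-- Each pair contributes at most `2e/(n²a)`: nothing within a cluster, and across clusters the
factor `n⁻⁵` coming from the separation absorbs the squared distance `≤ n³`. -/
lemma sneP_mul_le {D d n a : ℕ} (hd : 0 < d) (hn : 2 ≤ n) (ha : 2 ≤ a)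
    (x : Fin (n * a) → EuclideanSpace ℝ (Fin D)) (cl : Fin (n * a) → Fin n)
    (hsize : ∀ m : Fin n, (Finset.univ.filter (fun i => cl i = m)).card = a)
    (hdiam : ∀ i j : Fin (n * a), cl i = cl j → ‖x i - x j‖ ≤ 1)
    (hsep : ∀ i j : Fin (n * a), cl i ≠ cl j →
      Real.sqrt (5 * Real.log n) ≤ ‖x i - x j‖) (i j : Fin (n * a)) :
    sneP x i j * ‖lineEmbedding (d := d) hd cl i - lineEmbedding hd cl j‖ ^ 2 ≤
      2 * Real.exp 1 / ((n : ℝ) ^ 2 * a) := by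
  have hn0 : (0 : ℝ) < n := by positivity
  have ha2 : (2 : ℝ) ≤ a := by exact_mod_cast ha
  have hlog : 0 ≤ Real.log n := Real.log_natCast_nonneg n
  rw [lineEmbedding_norm_sq hd]
  by_cases h : cl i = cl j
  · rw [h, sub_self]
    simp only [ne_eq, OfNat.ofNat_ne_zero, not_false_eq_true, zero_pow, zero_mul, mul_zero]
    positivity
  · have hnum : Real.exp (-‖x i - x j‖ ^ 2) ≤ ((n : ℝ) ^ 5)⁻¹ := by
      have h5 : 5 * Real.log n ≤ ‖x i - x j‖ ^ 2 := (Real.sqrt_le_left (norm_nonneg _)).1 (hsep i j h)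
      have : ((n : ℝ) ^ 5)⁻¹ = Real.exp (-(5 * Real.log n)) := by
        rw [Real.exp_neg, mul_comm, Real.exp_mul, Real.exp_log hn0]
        norm_cast
      rw [this]
      exact Real.exp_le_exp.2 (by linarith)
    have hden : (a : ℝ) / 2 * Real.exp (-1) ≤
        ∑ ℓ ∈ Finset.univ.erase i, Real.exp (-‖x i - x ℓ‖ ^ 2) :=
      le_trans (mul_le_mul_of_nonneg_right (by linarith) (Real.exp_pos _).le)
        (sneDenom_ge ha x cl hsize hdiam i)
    have hp : sneP x i j ≤ ((n : ℝ) ^ 5)⁻¹ / ((a : ℝ) / 2 * Real.exp (-1)) :=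
      div_le_div₀ (by positivity) hnum (by positivity) hden
    have hdist : (((cl i : ℕ) : ℝ) - ((cl j : ℕ) : ℝ)) ^ 2 * Real.log n ≤ (n : ℝ) ^ 2 * n := by
      have hi : ((cl i : ℕ) : ℝ) ≤ n := by exact_mod_cast (cl i).isLt.le
      have hj : ((cl j : ℕ) : ℝ) ≤ n := by exact_mod_cast (cl j).isLt.le
      have hi0 : (0 : ℝ) ≤ ((cl i : ℕ) : ℝ) := Nat.cast_nonneg _
      have hj0 : (0 : ℝ) ≤ ((cl j : ℕ) : ℝ) := Nat.cast_nonneg _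
      refine mul_le_mul (sq_le_sq' (by linarith) (by linarith)) ?_ hlog (by positivity)
      linarith [Real.log_le_sub_one_of_pos hn0]
    refine (mul_le_mul hp hdist (by positivity) (by positivity)).trans_eq ?_
    rw [Real.exp_neg]
    field_simp

/-- any global minimizer ψ* of the SNE loss satisfies L(ψ*) ≤ 6e·n·a·log(2a). -/
theorem sneLoss_min_upper
    (D d n a : ℕ) (hD : 0 < D) (hd : 0 < d) (hn : 2 ≤ n) (ha : 2 ≤ a)
    (x : Fin (n * a) → EuclideanSpace ℝ (Fin D))
    (cl : Fin (n * a) → Fin n)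
    (hsize : ∀ m : Fin n, (Finset.univ.filter (fun i => cl i = m)).card = a)
    (hdiam : ∀ i j : Fin (n * a), cl i = cl j → ‖x i - x j‖ ≤ 1)
    (hsep : ∀ i j : Fin (n * a), cl i ≠ cl j →
      Real.sqrt (5 * Real.log n) ≤ ‖x i - x j‖)
    (ψs : Fin (n * a) → EuclideanSpace ℝ (Fin d))
    (hmin : ∀ ψ : Fin (n * a) → EuclideanSpace ℝ (Fin d), sneLoss x ψs ≤ sneLoss x ψ) :
    sneLoss x ψs ≤ 6 * Real.exp 1 * n * a * Real.log (2 * a) := by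
  have hk : 2 ≤ n * a := by nlinarith
  have hn2 : (2 : ℝ) ≤ n := by exact_mod_cast hn
  have ha2 : (2 : ℝ) ≤ a := by exact_mod_cast ha
  have hpoint : ∀ i : Fin (n * a),
      Real.log (∑ ℓ ∈ Finset.univ.erase i,
          Real.exp (-‖lineEmbedding (d := d) hd cl i - lineEmbedding hd cl ℓ‖ ^ 2)) +
        ∑ j ∈ Finset.univ.erase i,
          sneP x i j * ‖lineEmbedding (d := d) hd cl i - lineEmbedding hd cl j‖ ^ 2 ≤
      Real.log (2 * a) + Real.exp 1 := by
    intro i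
    refine add_le_add (Real.log_le_log (sneDenom_pos _ hk i)
      (lineEmbedding_denom_le hd hn cl hsize i)) ?_
    refine (Finset.sum_le_card_nsmul _ _ _ fun j _ =>
      sneP_mul_le hd hn ha x cl hsize hdiam hsep i j).trans ?_
    have hcard : ((Finset.univ.erase i).card : ℝ) ≤ n * a := by
      have := (Finset.univ.erase i).card_le_univ
      rw [Fintype.card_fin] at this
      exact_mod_cast this
    rw [nsmul_eq_mul]
    refine (mul_le_mul_of_nonneg_right hcard (by positivity)).trans ?_
    rw [mul_div_assoc', div_le_iff₀ (by positivity)]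
    have : 0 ≤ n * a * Real.exp 1 := by positivity
    nlinarith
  have hlog : 1 / 2 ≤ Real.log (2 * a) := by
    have := Real.log_two_gt_d9
    have h2 : Real.log 2 ≤ Real.log (2 * a) := Real.log_le_log (by norm_num) (by linarith)
    linarith
  have he : (1 : ℝ) ≤ Real.exp 1 := Real.one_le_exp (by norm_num)
  calc sneLoss x ψs ≤ sneLoss x (lineEmbedding hd cl) := hmin _
    _ ≤ ∑ _i : Fin (n * a), (Real.log (2 * a) + Real.exp 1) := by
        rw [sneLoss_eq x _ hk]
        exact Finset.sum_le_sum fun i _ => hpoint i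
    _ = n * a * (Real.log (2 * a) + Real.exp 1) := by
        rw [Finset.sum_const, Finset.card_univ, Fintype.card_fin, nsmul_eq_mul, Nat.cast_mul]
    _ ≤ n * a * (6 * Real.exp 1 * Real.log (2 * a)) := by
        refine mul_le_mul_of_nonneg_left ?_ (by positivity)
        nlinarith
    _ = 6 * Real.exp 1 * n * a * Real.log (2 * a) := by ring
end

section
/- For every ε > 0 there exists A ≥ 2 such that for every integer a ≥ A there exists N ≥ 2 such that for every integer n ≥ N, all D, d and all clustered data satisfying the setup assumptions: any embedding ψ* attaining a global minimum of the SNE loss L over embeddings into ℝ^d satisfies L(ψ*) ≤ (2e + ε)·n·a·log(2a). -/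
/-! The loss of any embedding decomposes row by row as
`∑ᵢ (∑_{j≠i} pᵢⱼ ‖ψᵢ-ψⱼ‖² + log Zᵢ)` with `Zᵢ = ∑_{ℓ≠i} exp(-‖ψᵢ-ψ_ℓ‖²)`, because each row of
affinities sums to one. The minimizer is compared with the embedding on a line that collapses
cluster `m` to the single point `√n · m`.

* Within a cluster the quadratic term vanishes. Across clusters `pᵢⱼ ≤ e · n⁻⁵`
  (`sneP_cross_le`), while all squared distances are at most `n · n²`; summing over the `n a`
  points gives at most `e · a / n ≤ e` once `n ≥ a`.
* Distinct image points are at least `√n` apart, so `Zᵢ ≤ a + n a · exp(-n) ≤ 2a`.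

Hence the minimum is at most `n a (e + log (2a))`, which is below `2e · n a · log (2a)` as soon
as `log (2a) ≥ 1`, so `A = 2` and `N = a` work. -/

open Finset

/-- A row of the loss is bounded by a bound `S` on the weighted squared distances plus the
logarithm of a bound `W` on the normalizing constant. -/
lemma sneLoss_row_le {D d k : ℕ} (x : Fin k → EuclideanSpace ℝ (Fin D))
    (ψ : Fin k → EuclideanSpace ℝ (Fin d)) (i : Fin k) (hne : (Finset.univ.erase i).Nonempty)
    {S W : ℝ} (hS : ∑ j ∈ Finset.univ.erase i, sneP x i j * ‖ψ i - ψ j‖ ^ 2 ≤ S)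
    (hW : ∑ ℓ ∈ Finset.univ.erase i, Real.exp (-‖ψ i - ψ ℓ‖ ^ 2) ≤ W) :
    -∑ j ∈ Finset.univ.erase i, sneP x i j * Real.log (sneQ ψ i j) ≤ S + Real.log W := by
  have hZ : 0 < ∑ ℓ ∈ Finset.univ.erase i, Real.exp (-‖ψ i - ψ ℓ‖ ^ 2) :=
    Finset.sum_pos (fun _ _ => Real.exp_pos _) hne
  have hX : 0 < ∑ ℓ ∈ Finset.univ.erase i, Real.exp (-‖x i - x ℓ‖ ^ 2) :=
    Finset.sum_pos (fun _ _ => Real.exp_pos _) hne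
  have hp : ∑ j ∈ Finset.univ.erase i, sneP x i j = 1 := by
    simp only [sneP]
    rw [← Finset.sum_div, div_self hX.ne']
  set Z := ∑ ℓ ∈ Finset.univ.erase i, Real.exp (-‖ψ i - ψ ℓ‖ ^ 2) with hZdef
  have hrow : -∑ j ∈ Finset.univ.erase i, sneP x i j * Real.log (sneQ ψ i j)
      = ∑ j ∈ Finset.univ.erase i, sneP x i j * ‖ψ i - ψ j‖ ^ 2 + Real.log Z := by
    have h1 : ∀ j, sneP x i j * Real.log (sneQ ψ i j)
        = -(sneP x i j * ‖ψ i - ψ j‖ ^ 2) - sneP x i j * Real.log Z := by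
      intro j
      rw [sneQ, ← hZdef, Real.log_div (Real.exp_pos _).ne' hZ.ne', Real.log_exp]
      ring
    simp only [h1]
    rw [Finset.sum_sub_distrib, Finset.sum_neg_distrib, ← Finset.sum_mul, hp]
    ring
  rw [hrow]
  exact add_le_add hS (Real.log_le_log hZ hW)

/-- A single neighbour at distance at most one keeps the denominator of `sneP` above `exp (-1)`,
while a point at distance `√(5 log n)` contributes at most `n⁻⁵` to the numerator. -/
lemma sneP_cross_le {D k n : ℕ} (hn : 0 < n) (x : Fin k → EuclideanSpace ℝ (Fin D))
    {i j j₀ : Fin k} (hj₀ : j₀ ≠ i) (h₀ : ‖x i - x j₀‖ ≤ 1)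
    (hsep : Real.sqrt (5 * Real.log n) ≤ ‖x i - x j‖) :
    sneP x i j ≤ Real.exp 1 / (n : ℝ) ^ 5 := by
  have hn' : (0 : ℝ) < n := by exact_mod_cast hn
  have hden : Real.exp (-1) ≤ ∑ ℓ ∈ Finset.univ.erase i, Real.exp (-‖x i - x ℓ‖ ^ 2) := by
    refine le_trans ?_ (Finset.single_le_sum (f := fun ℓ => Real.exp (-‖x i - x ℓ‖ ^ 2))
      (fun _ _ => (Real.exp_pos _).le) (Finset.mem_erase.2 ⟨hj₀, Finset.mem_univ _⟩))
    apply Real.exp_le_exp.2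
    nlinarith [norm_nonneg (x i - x j₀)]
  have hnum : Real.exp (-‖x i - x j‖ ^ 2) ≤ 1 / (n : ℝ) ^ 5 := by
    have h5 : 5 * Real.log n ≤ ‖x i - x j‖ ^ 2 := (Real.sqrt_le_left (norm_nonneg _)).1 hsep
    calc Real.exp (-‖x i - x j‖ ^ 2) ≤ Real.exp (-(Real.log ((n : ℝ) ^ 5))) := by
          apply Real.exp_le_exp.2
          rw [Real.log_pow]
          push_cast
          linarith
      _ = 1 / (n : ℝ) ^ 5 := by
          rw [Real.exp_neg, Real.exp_log (by positivity), one_div]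
  calc sneP x i j ≤ (1 / (n : ℝ) ^ 5) / Real.exp (-1) :=
        div_le_div₀ (by positivity) hnum (Real.exp_pos _) hden
    _ = Real.exp 1 / (n : ℝ) ^ 5 := by
        rw [Real.exp_neg, div_inv_eq_mul]
        ring

/-- The embedding on the first coordinate axis that sends all of cluster `m` to `√n · m`. -/
noncomputable def lineEmb {d k n : ℕ} (hd : 0 < d) (cl : Fin k → Fin n) (i : Fin k) :
    EuclideanSpace ℝ (Fin d) :=
  EuclideanSpace.single ⟨0, hd⟩ (Real.sqrt n * (cl i : ℕ))

lemma lineEmb_dist_sq {d k n : ℕ} (hd : 0 < d) (cl : Fin k → Fin n) (i j : Fin k) :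
    ‖lineEmb hd cl i - lineEmb hd cl j‖ ^ 2
      = n * (((cl i : ℕ) : ℝ) - ((cl j : ℕ) : ℝ)) ^ 2 := by
  have h : lineEmb hd cl i - lineEmb hd cl j = EuclideanSpace.single (⟨0, hd⟩ : Fin d)
      (Real.sqrt n * (((cl i : ℕ) : ℝ) - ((cl j : ℕ) : ℝ))) := by
    ext t
    by_cases ht : t = ⟨0, hd⟩ <;> simp [lineEmb, ht, mul_sub]
  rw [h, PiLp.norm_single, Real.norm_eq_abs, sq_abs, mul_pow,
    Real.sq_sqrt (Nat.cast_nonneg n)]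

lemma lineEmb_dist_sq_le {d k n : ℕ} (hd : 0 < d) (cl : Fin k → Fin n) (i j : Fin k) :
    ‖lineEmb hd cl i - lineEmb hd cl j‖ ^ 2 ≤ (n : ℝ) ^ 3 := by
  rw [lineEmb_dist_sq]
  have hi : ((cl i : ℕ) : ℝ) ≤ n := by exact_mod_cast (cl i).2.le
  have hj : ((cl j : ℕ) : ℝ) ≤ n := by exact_mod_cast (cl j).2.le
  have hi0 : (0 : ℝ) ≤ ((cl i : ℕ) : ℝ) := Nat.cast_nonneg _
  have hj0 : (0 : ℝ) ≤ ((cl j : ℕ) : ℝ) := Nat.cast_nonneg _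
  have h : (((cl i : ℕ) : ℝ) - ((cl j : ℕ) : ℝ)) ^ 2 ≤ (n : ℝ) ^ 2 :=
    sq_le_sq' (by linarith) (by linarith)
  calc (n : ℝ) * (((cl i : ℕ) : ℝ) - ((cl j : ℕ) : ℝ)) ^ 2 ≤ n * (n : ℝ) ^ 2 := by gcongr
    _ = (n : ℝ) ^ 3 := by ring

lemma le_lineEmb_dist_sq {d k n : ℕ} (hd : 0 < d) (cl : Fin k → Fin n) {i j : Fin k}
    (h : cl i ≠ cl j) : (n : ℝ) ≤ ‖lineEmb hd cl i - lineEmb hd cl j‖ ^ 2 := by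
  rw [lineEmb_dist_sq]
  have hz : ((cl i : ℕ) : ℤ) - ((cl j : ℕ) : ℤ) ≠ 0 := by
    intro h0
    apply h
    ext
    omega
  have h1 : (1 : ℤ) ≤ (((cl i : ℕ) : ℤ) - ((cl j : ℕ) : ℤ)) ^ 2 := by
    have := sq_pos_of_ne_zero hz
    omega
  have h2 : (1 : ℝ) ≤ (((cl i : ℕ) : ℝ) - ((cl j : ℕ) : ℝ)) ^ 2 := by exact_mod_cast h1
  nlinarith [(Nat.cast_nonneg n : (0 : ℝ) ≤ n)]

/-- The `a` points of the own cluster contribute at most one each to the normalizing constant,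
and the remaining points at most `exp (-n)` each, where `n * exp (-n) ≤ 1`. -/
lemma lineEmb_normalizer_le {d n a : ℕ} (hd : 0 < d) (cl : Fin (n * a) → Fin n)
    (hcard : ∀ m : Fin n, (Finset.univ.filter (fun i => cl i = m)).card = a) (i : Fin (n * a)) :
    ∑ ℓ ∈ Finset.univ.erase i, Real.exp (-‖lineEmb hd cl i - lineEmb hd cl ℓ‖ ^ 2)
      ≤ 2 * (a : ℝ) := by
  have hpt : ∀ ℓ : Fin (n * a), Real.exp (-‖lineEmb hd cl i - lineEmb hd cl ℓ‖ ^ 2)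
      ≤ (if cl ℓ = cl i then 1 else 0) + Real.exp (-(n : ℝ)) := by
    intro ℓ
    by_cases h : cl ℓ = cl i
    · have : Real.exp (-‖lineEmb hd cl i - lineEmb hd cl ℓ‖ ^ 2) ≤ 1 := by
        apply Real.exp_le_one_iff.2
        nlinarith [sq_nonneg ‖lineEmb hd cl i - lineEmb hd cl ℓ‖]
      rw [if_pos h]
      linarith [Real.exp_pos (-(n : ℝ))]
    · rw [if_neg h, zero_add]
      exact Real.exp_le_exp.2 (neg_le_neg (le_lineEmb_dist_sq hd cl (Ne.symm h)))
  have hexp : (n : ℝ) * Real.exp (-(n : ℝ)) ≤ 1 := by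
    rw [Real.exp_neg, ← div_eq_mul_inv, div_le_one (Real.exp_pos _)]
    linarith [Real.add_one_le_exp (n : ℝ)]
  calc _ ≤ ∑ ℓ : Fin (n * a), Real.exp (-‖lineEmb hd cl i - lineEmb hd cl ℓ‖ ^ 2) :=
        Finset.sum_le_sum_of_subset_of_nonneg (Finset.erase_subset _ _)
          (fun _ _ _ => (Real.exp_pos _).le)
    _ ≤ ∑ ℓ : Fin (n * a), ((if cl ℓ = cl i then (1 : ℝ) else 0) + Real.exp (-(n : ℝ))) :=
        Finset.sum_le_sum (fun ℓ _ => hpt ℓ)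
    _ = a + a * (n * Real.exp (-(n : ℝ))) := by
        rw [Finset.sum_add_distrib, Finset.sum_boole, hcard (cl i)]
        simp only [Finset.sum_const, Finset.card_univ, Fintype.card_fin, nsmul_eq_mul]
        push_cast
        ring
    _ ≤ 2 * (a : ℝ) := by nlinarith [(Nat.cast_nonneg a : (0 : ℝ) ≤ a)]

/-- for every ε > 0 there is A ≥ 2 such that for every a ≥ A there is N ≥ 2 such
that for every n ≥ N and all clustered data, any global minimizer ψ* of the SNE loss satisfies
L(ψ*) ≤ (2e+ε)·n·a·log(2a). -/
theorem sneLoss_min_upper_improved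
    (ε : ℝ) (hε : 0 < ε) :
    ∃ A : ℕ, 2 ≤ A ∧ ∀ a : ℕ, A ≤ a →
      ∃ N : ℕ, 2 ≤ N ∧ ∀ n : ℕ, N ≤ n →
        ∀ (D d : ℕ), 0 < D → 0 < d →
        ∀ (x : Fin (n * a) → EuclideanSpace ℝ (Fin D))
          (cl : Fin (n * a) → Fin n),
          (∀ m : Fin n, (Finset.univ.filter (fun i => cl i = m)).card = a) →
          (∀ i j : Fin (n * a), cl i = cl j → ‖x i - x j‖ ≤ 1) →
          (∀ i j : Fin (n * a), cl i ≠ cl j →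
            Real.sqrt (5 * Real.log n) ≤ ‖x i - x j‖) →
          ∀ ψs : Fin (n * a) → EuclideanSpace ℝ (Fin d),
            (∀ ψ : Fin (n * a) → EuclideanSpace ℝ (Fin d),
              sneLoss x ψs ≤ sneLoss x ψ) →
            sneLoss x ψs ≤ (2 * Real.exp 1 + ε) * n * a * Real.log (2 * a) := by
  refine ⟨2, le_rfl, fun a ha => ⟨a, ha, ?_⟩⟩
  intro n hn D d _ hd x cl hcard hdiam hsep ψs hmin
  have hn0 : 0 < n := by omega
  have hnR : (0 : ℝ) < n := by exact_mod_cast hn0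
  have haR : (2 : ℝ) ≤ a := by exact_mod_cast ha
  have hanR : (a : ℝ) ≤ n := by exact_mod_cast hn
  -- A second point of the cluster of each `i` exists because `a ≥ 2`.
  have hmate : ∀ i : Fin (n * a), ∃ j₀, j₀ ≠ i ∧ cl i = cl j₀ := by
    intro i
    have h1 : 1 < (Finset.univ.filter (fun j => cl j = cl i)).card := by
      rw [hcard]
      omega
    obtain ⟨j₀, hj, hne⟩ := Finset.exists_mem_ne h1 i
    exact ⟨j₀, hne, (Finset.mem_filter.1 hj).2.symm⟩
  have hrow : ∀ i : Fin (n * a),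
      -∑ j ∈ Finset.univ.erase i, sneP x i j * Real.log (sneQ (lineEmb hd cl) i j)
        ≤ Real.exp 1 + Real.log (2 * a) := by
    intro i
    obtain ⟨j₀, hj₀, hcl₀⟩ := hmate i
    refine sneLoss_row_le x (lineEmb hd cl) i ⟨j₀, Finset.mem_erase.2 ⟨hj₀, Finset.mem_univ _⟩⟩
      ?_ (lineEmb_normalizer_le hd cl hcard i)
    have hterm : ∀ j : Fin (n * a),
        sneP x i j * ‖lineEmb hd cl i - lineEmb hd cl j‖ ^ 2 ≤ Real.exp 1 / (n : ℝ) ^ 2 := by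
      intro j
      by_cases h : cl i = cl j
      · rw [lineEmb_dist_sq, h, sub_self]
        simp only [ne_eq, OfNat.ofNat_ne_zero, not_false_eq_true, zero_pow, mul_zero]
        positivity
      · calc _ ≤ Real.exp 1 / (n : ℝ) ^ 5 * (n : ℝ) ^ 3 :=
              mul_le_mul (sneP_cross_le hn0 x hj₀ (hdiam i j₀ hcl₀) (hsep i j h))
                (lineEmb_dist_sq_le hd cl i j) (by positivity) (by positivity)
          _ = Real.exp 1 / (n : ℝ) ^ 2 := by
              field_simp
    calc _ ≤ ∑ j ∈ Finset.univ.erase i, Real.exp 1 / (n : ℝ) ^ 2 :=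
          Finset.sum_le_sum (fun j _ => hterm j)
      _ ≤ ∑ j : Fin (n * a), Real.exp 1 / (n : ℝ) ^ 2 :=
          Finset.sum_le_sum_of_subset_of_nonneg (Finset.erase_subset _ _)
            (fun _ _ _ => by positivity)
      _ = Real.exp 1 * (a / n) := by
          simp only [Finset.sum_const, Finset.card_univ, Fintype.card_fin, nsmul_eq_mul]
          push_cast
          field_simp
      _ ≤ Real.exp 1 * 1 := by
          gcongr
          exact (div_le_one hnR).2 hanR
      _ = Real.exp 1 := mul_one _
  have hloss : sneLoss x ψs ≤ (n * a : ℝ) * (Real.exp 1 + Real.log (2 * a)) := by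
    refine (hmin (lineEmb hd cl)).trans ?_
    rw [sneLoss, ← Finset.sum_neg_distrib]
    refine (Finset.sum_le_sum (fun i _ => hrow i)).trans (le_of_eq ?_)
    simp only [Finset.sum_const, Finset.card_univ, Fintype.card_fin, nsmul_eq_mul]
    push_cast
    ring
  have hlog : 1 ≤ Real.log (2 * a) := by
    rw [Real.le_log_iff_exp_le (by positivity)]
    linarith [Real.exp_one_lt_d9]
  have he : 2 ≤ Real.exp 1 := by linarith [Real.add_one_le_exp (1 : ℝ)]
  have hfin : Real.exp 1 + Real.log (2 * a) ≤ (2 * Real.exp 1 + ε) * Real.log (2 * a) := by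
    nlinarith [mul_nonneg hε.le (by linarith : (0 : ℝ) ≤ Real.log (2 * a))]
  calc sneLoss x ψs ≤ (n * a : ℝ) * (Real.exp 1 + Real.log (2 * a)) := hloss
    _ ≤ (n * a : ℝ) * ((2 * Real.exp 1 + ε) * Real.log (2 * a)) := by gcongr
    _ = (2 * Real.exp 1 + ε) * n * a * Real.log (2 * a) := by ring
end
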